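/- arXiv:1506.03430 — 6 statements merged into one kernel-verified Lean document; each statement's English description precedes it below -/
import Mathlib

section
/- For every y ∈ ℝ^{n1×n2}, every θ* ∈ ℝ^{n1×n2}, and every θ ∈ M, writing ε = y − θ* and letting θ̂ be the Euclidean projection of y onto M, one has the deterministic inequality ||θ̂ − θ*||² ≤ ||θ* − θ||² + || Π(ε, T_M(θ)) ||², where Π(ε, T_M(θ)) is the Euclidean projection of ε onto the tangent cone T_M(θ). -/
/-!
Comparing the projection `θ̂` of `y` with `θ ∈ M`, the variational inequality
`⟨y − θ̂, θ − θ̂⟩ ≤ 0` rearranges to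
`‖θ̂ − θ*‖² ≤ ‖θ* − θ‖² + 2⟨ε, θ̂ − θ⟩ − ‖θ̂ − θ‖²`.
Since `θ̂ − θ` lies in the tangent cone `T` of `M` at `θ`, whose polar contains `ε − Π(ε, T)`, the
noise `ε` may be replaced by `Π(ε, T)`, and completing the square gives the bound.
-/

open MeasureTheory ProbabilityTheory

noncomputable section

/-- The set of isotonic (coordinatewise nondecreasing) `n1 × n2` matrices. -/
def Isotonic {n1 n2 : ℕ} (θ : Fin n1 → Fin n2 → ℝ) : Prop :=
  ∀ ⦃i k : Fin n1⦄ ⦃j l : Fin n2⦄, i ≤ k → j ≤ l → θ i j ≤ θ k l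

/-- Squared Frobenius norm of a matrix. -/
def frobSq {n1 n2 : ℕ} (θ : Fin n1 → Fin n2 → ℝ) : ℝ :=
  ∑ i, ∑ j, θ i j ^ 2

/-- The tangent cone of the isotonic cone `M` at `θ`: the closure of
`{α (u − θ) : α > 0, u ∈ M}`. -/
def tangentCone {n1 n2 : ℕ} (θ : Fin n1 → Fin n2 → ℝ) : Set (Fin n1 → Fin n2 → ℝ) :=
  closure {v | ∃ α : ℝ, 0 < α ∧ ∃ u, Isotonic u ∧ v = α • (u - θ)}

section TangentCone

variable {E : Type*} [AddCommGroup E] [Module ℝ E] [TopologicalSpace E] [ContinuousAdd E]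
  [ContinuousConstSMul ℝ E] {K : Set E} {x u : E}

/-- The tangent cone at `x` of a convex set `K`, as the smallest closed convex cone containing
`K - x`. Without convexity of `K` it can be larger than the usual tangent cone. -/
def convexTangentCone (K : Set E) (x : E) : ConvexCone ℝ E :=
  (ConvexCone.hull ℝ ((· - x) '' K)).closure

lemma sub_mem_convexTangentCone (hu : u ∈ K) : u - x ∈ convexTangentCone K x :=
  subset_closure (ConvexCone.subset_hull ⟨u, hu, rfl⟩)

lemma coe_convexTangentCone (hK : Convex ℝ K) (x : E) :
    (convexTangentCone K x : Set E) =
      closure {v | ∃ α : ℝ, 0 < α ∧ ∃ u ∈ K, v = α • (u - x)} := by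
  have hKx : Convex ℝ ((· - x) '' K) := by
    simpa only [Set.sub_singleton] using hK.sub (convex_singleton x)
  rw [convexTangentCone, ConvexCone.coe_closure, ConvexCone.coe_hull_of_convex hKx]
  simp only [Set.mem_smul_set, Set.exists_mem_image, eq_comm]

end TangentCone

section Projection

open scoped RealInnerProductSpace

variable {E : Type*} [NormedAddCommGroup E] [InnerProductSpace ℝ E]

lemma real_inner_sub_sub_nonpos_of_isMinOn {K : Set E} (hK : Convex ℝ K) {x p u : E}
    (hp : p ∈ K) (hmin : IsMinOn (fun w ↦ ‖x - w‖) K p) (hu : u ∈ K) :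
    ⟪x - p, u - p⟫ ≤ 0 :=
  (norm_eq_iInf_iff_real_inner_le_zero hK hp).1 (hmin.iInf_eq hp).symm u hu

lemma real_inner_le_of_isMinOn_convexCone {C : ConvexCone ℝ E} {x p u : E} (hp : p ∈ C)
    (hmin : IsMinOn (fun w ↦ ‖x - w‖) C p) (hu : u ∈ C) : ⟪x, u⟫ ≤ ⟪p, u⟫ := by
  have hpolar := real_inner_sub_sub_nonpos_of_isMinOn C.convex hp hmin (C.add_mem hp hu)
  rwa [add_sub_cancel_left, inner_sub_left, sub_nonpos] at hpolar

lemma two_mul_real_inner_sub_norm_sq_le_of_isMinOn_convexCone {C : ConvexCone ℝ E} {x p u : E}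
    (hp : p ∈ C) (hmin : IsMinOn (fun w ↦ ‖x - w‖) C p) (hu : u ∈ C) :
    2 * ⟪x, u⟫ - ‖u‖ ^ 2 ≤ ‖p‖ ^ 2 := by
  have hinner := real_inner_le_of_isMinOn_convexCone hp hmin hu
  have hsq := norm_sub_sq_real p u
  linarith [sq_nonneg ‖p - u‖]

lemma norm_sub_sq_le_of_isMinOn {K : Set E} (hK : Convex ℝ K) {y p u : E} (z : E)
    (hp : p ∈ K) (hmin : IsMinOn (fun w ↦ ‖y - w‖) K p) (hu : u ∈ K) :
    ‖p - z‖ ^ 2 ≤ ‖z - u‖ ^ 2 + (2 * ⟪y - z, p - u⟫ - ‖p - u‖ ^ 2) := by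
  have hvar := real_inner_sub_sub_nonpos_of_isMinOn hK hp hmin hu
  have hzu : ‖z - u‖ ^ 2 = ‖p - z‖ ^ 2 - 2 * ⟪p - z, p - u⟫ + ‖p - u‖ ^ 2 := by
    rw [← norm_sub_sq_real, sub_sub_sub_cancel_left, norm_sub_rev]
  have hsplit : ⟪y - z, p - u⟫ = ⟪p - z, p - u⟫ - ⟪y - p, u - p⟫ := by
    rw [← neg_sub p u, inner_neg_right, sub_neg_eq_add, ← inner_add_left, add_comm,
      sub_add_sub_cancel]
  linarith

theorem isotonic_projection_tangent_cone_inequality_general {K : Set E} (hK : Convex ℝ K)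
    {y θstar θ θhat p : E} (hθ : θ ∈ K) (hθhat : θhat ∈ K)
    (hproj : IsMinOn (fun u ↦ ‖y - u‖) K θhat) (hp : p ∈ convexTangentCone K θ)
    (hpmin : IsMinOn (fun u ↦ ‖(y - θstar) - u‖) (convexTangentCone K θ) p) :
    ‖θhat - θstar‖ ^ 2 ≤ ‖θstar - θ‖ ^ 2 + ‖p‖ ^ 2 :=
  calc ‖θhat - θstar‖ ^ 2
    _ ≤ ‖θstar - θ‖ ^ 2 + (2 * ⟪y - θstar, θhat - θ⟫ - ‖θhat - θ‖ ^ 2) :=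
      norm_sub_sq_le_of_isMinOn hK θstar hθhat hproj hθ
    _ ≤ ‖θstar - θ‖ ^ 2 + ‖p‖ ^ 2 := by
      gcongr
      exact two_mul_real_inner_sub_norm_sq_le_of_isMinOn_convexCone hp hpmin
        (sub_mem_convexTangentCone hθhat)

end Projection

open scoped Matrix.Norms.Frobenius

lemma frobenius_norm_sq {m n α : Type*} [Fintype m] [Fintype n] [SeminormedAddCommGroup α]
    (A : Matrix m n α) : ‖A‖ ^ 2 = ∑ i, ∑ j, ‖A i j‖ ^ 2 := by
  rw [Matrix.frobenius_norm_def, ← Real.sqrt_eq_rpow, Real.sq_sqrt (by positivity)]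
  simp only [Real.rpow_two]

/-- The Frobenius inner product on matrices, inducing Mathlib's scoped Frobenius norm. -/
instance frobeniusInnerProductSpace {m n 𝕜 F : Type*} [Fintype m] [Fintype n] [RCLike 𝕜]
    [NormedAddCommGroup F] [InnerProductSpace 𝕜 F] : InnerProductSpace 𝕜 (Matrix m n F) where
  inner A B := ∑ i, ∑ j, inner 𝕜 (A i j) (B i j)
  norm_sq_eq_re_inner A := by
    simp only [frobenius_norm_sq, norm_sq_eq_re_inner (𝕜 := 𝕜), map_sum]
  conj_inner_symm A B := by simp only [map_sum, inner_conj_symm]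
  add_left A B C := by simp only [Matrix.add_apply, inner_add_left, Finset.sum_add_distrib]
  smul_left A B r := by simp only [Matrix.smul_apply, inner_smul_left, Finset.mul_sum]

lemma frobSq_eq_norm_sq {n1 n2 : ℕ} (A : Fin n1 → Fin n2 → ℝ) :
    frobSq A = ‖Matrix.of A‖ ^ 2 := by
  simp only [frobSq, frobenius_norm_sq, Matrix.of_apply, Real.norm_eq_abs, sq_abs]

lemma frobSq_le_frobSq_iff {n1 n2 : ℕ} {A B : Fin n1 → Fin n2 → ℝ} :
    frobSq A ≤ frobSq B ↔ ‖Matrix.of A‖ ≤ ‖Matrix.of B‖ := by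
  rw [frobSq_eq_norm_sq, frobSq_eq_norm_sq, sq_le_sq₀ (norm_nonneg _) (norm_nonneg _)]

lemma convex_isotonic {n1 n2 : ℕ} :
    Convex ℝ {θ : Matrix (Fin n1) (Fin n2) ℝ | Isotonic θ} := by
  intro θ hθ η hη s t hs ht _ i k j l hik hjl
  exact add_le_add (mul_le_mul_of_nonneg_left (hθ hik hjl) hs)
    (mul_le_mul_of_nonneg_left (hη hik hjl) ht)

lemma mem_tangentCone_iff {n1 n2 : ℕ} {θ v : Matrix (Fin n1) (Fin n2) ℝ} :
    v ∈ tangentCone θ ↔ v ∈ convexTangentCone {η | Isotonic η} θ :=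
  (Set.ext_iff.1 (coe_convexTangentCone convex_isotonic θ) v).symm

/-- **Deterministic projection inequality (proof of Lemma 3).** For every data matrix
`y`, every `θ*`, and every isotonic `θ`: if `θ̂` is the Euclidean projection of `y`
onto the isotonic cone `M` and `p` is the Euclidean projection of `ε = y − θ*` onto
the tangent cone `T_M(θ)`, then `‖θ̂ − θ*‖² ≤ ‖θ* − θ‖² + ‖p‖²`. -/
theorem isotonic_projection_tangent_cone_inequality
    {n1 n2 : ℕ} (y θstar θ : Fin n1 → Fin n2 → ℝ) (hθ : Isotonic θ)
    (θhat : Fin n1 → Fin n2 → ℝ) (hθhat : Isotonic θhat)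
    (hproj : ∀ u, Isotonic u → frobSq (y - θhat) ≤ frobSq (y - u))
    (p : Fin n1 → Fin n2 → ℝ) (hp : p ∈ tangentCone θ)
    (hpmin : ∀ u ∈ tangentCone θ, frobSq ((y - θstar) - p) ≤ frobSq ((y - θstar) - u)) :
    frobSq (θhat - θstar) ≤ frobSq (θstar - θ) + frobSq p := by
  rw [frobSq_eq_norm_sq, frobSq_eq_norm_sq, frobSq_eq_norm_sq]
  exact isotonic_projection_tangent_cone_inequality_general convex_isotonic hθ hθhat
    (fun u hu ↦ frobSq_le_frobSq_iff.1 (hproj u hu)) (mem_tangentCone_iff.1 hp)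
    fun u hu ↦ frobSq_le_frobSq_iff.1 (hpmin u (mem_tangentCone_iff.2 hu))
end
end

section
/- Fix θ ∈ M and a rectangular partition π = (A_1,…,A_k) of {1,…,n1}×{1,…,n2} such that θ is constant on π. Then the tangent cone of M at θ satisfies the inclusion T_M(θ) ⊆ { v ∈ ℝ^{n1×n2} : for each i = 1,…,k, the restriction v(A_i) is isotonic on A_i }, where v(A_i) is isotonic on A_i means v_{ab} ≤ v_{cd} whenever (a,b), (c,d) ∈ A_i with a ≤ c and b ≤ d. -/
open MeasureTheory ProbabilityTheory

noncomputable section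

/-- A rectangle `{(i,j) : k1 ≤ i ≤ l1, k2 ≤ j ≤ l2}` in `{1,…,n1} × {1,…,n2}`. -/
def IsRect {n1 n2 : ℕ} (A : Set (Fin n1 × Fin n2)) : Prop :=
  ∃ (k1 l1 : Fin n1) (k2 l2 : Fin n2), k1 ≤ l1 ∧ k2 ≤ l2 ∧
    A = {p | k1 ≤ p.1 ∧ p.1 ≤ l1 ∧ k2 ≤ p.2 ∧ p.2 ≤ l2}

/-- A rectangular partition: pairwise disjoint rectangles covering the whole index set. -/
def IsRectPartition {n1 n2 : ℕ} (P : Finset (Set (Fin n1 × Fin n2))) : Prop :=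
  (∀ A ∈ P, IsRect A) ∧
  (∀ A ∈ P, ∀ B ∈ P, A ≠ B → Disjoint A B) ∧
  (∀ p : Fin n1 × Fin n2, ∃ A ∈ P, p ∈ A)

/-- `θ` is constant on each member of the partition `P`. -/
def ConstOnPartition {n1 n2 : ℕ} (θ : Fin n1 → Fin n2 → ℝ)
    (P : Finset (Set (Fin n1 × Fin n2))) : Prop :=
  ∀ A ∈ P, ∀ p ∈ A, ∀ q ∈ A, θ p.1 p.2 = θ q.1 q.2

/-- `k(θ)`: the smallest number of rectangles in a rectangular partition on which `θ`
is constant. -/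
def kRect {n1 n2 : ℕ} (θ : Fin n1 → Fin n2 → ℝ) : ℕ :=
  sInf {k | ∃ P, IsRectPartition P ∧ ConstOnPartition θ P ∧ P.card = k}

/-- `v` is isotonic on a subset `A` of indices. -/
def IsotonicOn {n1 n2 : ℕ} (v : Fin n1 → Fin n2 → ℝ) (A : Set (Fin n1 × Fin n2)) : Prop :=
  ∀ p ∈ A, ∀ q ∈ A, p.1 ≤ q.1 → p.2 ≤ q.2 → v p.1 p.2 ≤ v q.1 q.2

/-!
Subtracting a function which is antitone on a set `s` (in particular, constant on `s`) and scaling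
by a positive number both preserve monotonicity on `s`. Hence all generators `α • (u - θ)` of the
tangent cone are monotone on every piece where `θ` is constant, and so are their limits, because
monotonicity on a set is a closed condition for pointwise convergence.
-/

open Function

section OrderedModule

variable {ι 𝕜 E : Type*} [Preorder ι] [Zero 𝕜] [Preorder 𝕜] [AddCommGroup E] [Preorder E]
  [SMul 𝕜 E]

variable (𝕜) in
/-- The tangent cone at `θ` of the cone of monotone functions `ι → E`, with scalars in `𝕜`. The
closure is taken in the topology of pointwise convergence, and `θ` may be any function. For
`ι = Fin n1 × Fin n2` and `𝕜 = E = ℝ` this is `tangentCone` with the matrices uncurried. -/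
def monotoneTangentCone [TopologicalSpace E] (θ : ι → E) : Set (ι → E) :=
  closure {v | ∃ α : 𝕜, 0 < α ∧ ∃ u, Monotone u ∧ v = α • (u - θ)}

variable [IsOrderedAddMonoid E] [PosSMulMono 𝕜 E] {θ : ι → E}

theorem monotoneOn_smul_sub {u : ι → E} {s : Set ι} (hu : MonotoneOn u s) (hθ : AntitoneOn θ s)
    {α : 𝕜} (hα : 0 ≤ α) : MonotoneOn (α • (u - θ)) s := fun _ hp _ hq hpq =>
  smul_le_smul_of_nonneg_left (sub_le_sub (hu hp hq hpq) (hθ hp hq hpq)) hα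

theorem tangent_cone_subset_piecewise_isotonic_general [TopologicalSpace E]
    [OrderClosedTopology E] {P : Set (Set ι)} (hθ : ∀ s ∈ P, AntitoneOn θ s) :
    monotoneTangentCone 𝕜 θ ⊆ {v | ∀ s ∈ P, MonotoneOn v s} := by
  intro v hv s hs
  refine closure_minimal ?_ isClosed_monotoneOn hv
  rintro _ ⟨α, hα, u, hu, rfl⟩
  exact monotoneOn_smul_sub (hu.monotoneOn s) (hθ s hs) hα.le

end OrderedModule

section Matrix

variable {n1 n2 : ℕ} {θ v : Fin n1 → Fin n2 → ℝ}

theorem Isotonic.monotone_uncurry (hθ : Isotonic θ) : Monotone (uncurry θ) :=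
  fun _ _ hpq => hθ hpq.1 hpq.2

theorem isotonicOn_iff_monotoneOn_uncurry {A : Set (Fin n1 × Fin n2)} :
    IsotonicOn v A ↔ MonotoneOn (uncurry v) A :=
  ⟨fun h p hp q hq hpq => h p hp q hq hpq.1 hpq.2, fun h _ hp _ hq h₁ h₂ => h hp hq ⟨h₁, h₂⟩⟩

theorem ConstOnPartition.antitoneOn_uncurry {P : Finset (Set (Fin n1 × Fin n2))}
    (hθ : ConstOnPartition θ P) : ∀ A ∈ P, AntitoneOn (uncurry θ) A :=
  fun A hA p hp q hq _ => (hθ A hA q hq p hp).le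

theorem uncurry_mem_monotoneTangentCone (hv : v ∈ tangentCone θ) :
    uncurry v ∈ monotoneTangentCone ℝ (uncurry θ) := by
  have continuous_uncurry : Continuous (uncurry : (Fin n1 → Fin n2 → ℝ) → Fin n1 × Fin n2 → ℝ) :=
    continuous_pi fun p => continuous_apply_apply p.1 p.2
  refine map_mem_closure continuous_uncurry hv ?_
  rintro _ ⟨α, hα, u, hu, rfl⟩
  exact ⟨α, hα, uncurry u, hu.monotone_uncurry, rfl⟩

end Matrix

/-- **Lemma 4 (tangent cone inclusion).** If `θ` is isotonic and constant on a
rectangular partition `P` of the index set, then every element of the tangent cone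
`T_M(θ)` is isotonic on each rectangle of `P`. -/
theorem tangent_cone_subset_piecewise_isotonic
    {n1 n2 : ℕ} (θ : Fin n1 → Fin n2 → ℝ) (hθ : Isotonic θ)
    (P : Finset (Set (Fin n1 × Fin n2))) (hP : IsRectPartition P)
    (hconst : ConstOnPartition θ P) :
    tangentCone θ ⊆ {v | ∀ A ∈ P, IsotonicOn v A} := fun _ hv A hA =>
  isotonicOn_iff_monotoneOn_uncurry.2 <| tangent_cone_subset_piecewise_isotonic_general
    hconst.antitoneOn_uncurry (uncurry_mem_monotoneTangentCone hv) A hA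
end
end

section
/- There exists a universal constant C > 0 such that the following holds for all integers n1, n2 > 1 with n = n1·n2 and all σ > 0. For every θ ∈ M and every rectangular partition π = (A_1,…,A_k) of {1,…,n1}×{1,…,n2} on which θ is constant, the expected squared norm of the projection of the Gaussian noise matrix onto the tangent cone satisfies E || Π(ε, T_M(θ)) ||² ≤ C·k·σ²·(log n)⁸, where the entries ε_{ij} are i.i.d. N(0,σ²). -/
open MeasureTheory ProbabilityTheory

noncomputable section

/-- The law of an `n1 × n2` matrix with i.i.d. `N(0, σ²)` entries. -/
def noiseMeasure (n1 n2 : ℕ) (σ : ℝ) : Measure (Fin n1 → Fin n2 → ℝ) :=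
  Measure.pi fun _ => Measure.pi fun _ => gaussianReal 0 ⟨σ ^ 2, sq_nonneg σ⟩

/-- `lse` is the least squares estimator: for every data matrix `y`, `lse y` minimizes
the squared Frobenius distance to `y` over the cone of isotonic matrices. -/
def IsLSE {n1 n2 : ℕ} (lse : (Fin n1 → Fin n2 → ℝ) → Fin n1 → Fin n2 → ℝ) : Prop :=
  ∀ y, Isotonic (lse y) ∧ ∀ θ, Isotonic θ → frobSq (y - lse y) ≤ frobSq (y - θ)

/-- The risk `R(θ*, est) = E ‖est(θ* + ε) − θ*‖² / n`, where `ε` has i.i.d. `N(0,σ²)`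
entries and `n = n1 n2`. -/
def risk {n1 n2 : ℕ} (σ : ℝ) (θstar : Fin n1 → Fin n2 → ℝ)
    (est : (Fin n1 → Fin n2 → ℝ) → Fin n1 → Fin n2 → ℝ) : ℝ :=
  (∫ ε, frobSq (est (θstar + ε) - θstar) ∂noiseMeasure n1 n2 σ) / (n1 * n2)

/-- The Euclidean (Frobenius) projection of `v` onto a set `K`: the point of `K`
minimizing the squared Frobenius distance to `v` (when such a point exists and is
unique, `Classical.epsilon` returns it). -/
def projC {n1 n2 : ℕ} (K : Set (Fin n1 → Fin n2 → ℝ)) (v : Fin n1 → Fin n2 → ℝ) :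
    Fin n1 → Fin n2 → ℝ :=
  Classical.epsilon fun p => p ∈ K ∧ ∀ u ∈ K, frobSq (v - p) ≤ frobSq (v - u)

/-!
Let `p` be the projection of `ε` onto the tangent cone. Since the tangent cone is a cone,
`‖p‖² = ⟨ε, p⟩`, and on every rectangle of the partition `p` is isotonic. It therefore suffices to
bound the pairing of `ε` with an isotonic matrix `f` on one rectangle by `K ‖f‖`: with
`2 ⟨ε, p⟩_A ≤ K² + ‖p‖²_A` and summation over the `k` rectangles, `‖p‖² ≤ k K²`.

The pairing is controlled by the sums of `ε` over subrectangles alone, which are all at most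
`M √area`. After passing to positive and negative parts and reversing the order, `f` is nonnegative
and antitone. Cutting its index set into the `L²` rectangles with dyadic side lengths `2 ^ a`,
`2 ^ b` that start at `(2 ^ a - 1, 2 ^ b - 1)`, on each piece `f √area` is at most `‖f‖`, because
`f` is at least as large on the rectangle between the origin and the corner of the piece, which has
the same area. On each piece, `f` is approximated blockwise along a sequence of dyadic refinements,
and each of the `O(L)` refinements changes the pairing by at most `M ‖f‖`, as the total variation of
`f` along a row or column of the piece is at most its corner value. Hence `K = O(L³ M)` with
`L = O(log n)`. Finally, `M²` is a maximum of at most `n²` squared sub-Gaussian variables, of mean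
`O(σ² log n)`.
-/

section DyadicChaining

theorem sum_comp_two_mul_div_two_sub_le {g : ℕ → ℝ} (hg : Antitone g) (N : ℕ) :
    ∑ u ∈ Finset.range N, (g (2 * (u / 2)) - g u) ≤ g 0 - g (N - 1) := by
  induction N with
  | zero => simp
  | succ N ih =>
    rw [Finset.sum_range_succ, Nat.add_sub_cancel]
    linarith [hg (show 2 * (N / 2) ≥ N - 1 by omega)]

theorem sum_range_mul_eq_sum_sum (F : ℕ → ℝ) (N h : ℕ) :
    ∑ i ∈ Finset.range (N * h), F i =
      ∑ u ∈ Finset.range N, ∑ r ∈ Finset.range h, F (u * h + r) := by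
  induction N with
  | zero => simp
  | succ N ih => rw [Finset.sum_range_succ, ← ih, Nat.succ_mul, Finset.sum_range_add]

/-- The sum of `w` over the `h × k` block with block coordinates `(u, v)`. -/
def blockSum (w : ℕ → ℕ → ℝ) (h k u v : ℕ) : ℝ :=
  ∑ i ∈ Finset.range h, ∑ j ∈ Finset.range k, w (u * h + i) (v * k + j)

/-- The pairing over `range m × range n` of `w` with the blockwise approximation of `f` at
resolution `h × k`: on each block, `f` is replaced by its value at the smallest corner. -/
def blockPairing (w f : ℕ → ℕ → ℝ) (m n h k : ℕ) : ℝ :=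
  ∑ i ∈ Finset.range m, ∑ j ∈ Finset.range n, w i j * f (h * (i / h)) (k * (j / k))

theorem blockSum_swap (w : ℕ → ℕ → ℝ) (h k u v : ℕ) :
    blockSum (Function.swap w) k h v u = blockSum w h k u v :=
  Finset.sum_comm

theorem blockPairing_swap (w f : ℕ → ℕ → ℝ) (m n h k : ℕ) :
    blockPairing (Function.swap w) (Function.swap f) n m k h = blockPairing w f m n h k :=
  Finset.sum_comm

theorem blockPairing_one_one (w f : ℕ → ℕ → ℝ) (m n : ℕ) :
    blockPairing w f m n 1 1 = ∑ i ∈ Finset.range m, ∑ j ∈ Finset.range n, w i j * f i j := by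
  simp only [blockPairing, Nat.div_one, one_mul]

theorem blockPairing_self (w f : ℕ → ℕ → ℝ) (m n : ℕ) :
    blockPairing w f m n m n = blockSum w m n 0 0 * f 0 0 := by
  simp only [blockPairing, blockSum, Finset.sum_mul]
  refine Finset.sum_congr rfl fun i hi => Finset.sum_congr rfl fun j hj => ?_
  simp [Nat.div_eq_of_lt (Finset.mem_range.1 hi), Nat.div_eq_of_lt (Finset.mem_range.1 hj)]

theorem sum_mul_comp_div_eq_sum_blockSum_mul (w c : ℕ → ℕ → ℝ) {h k : ℕ} (hh : 0 < h) (hk : 0 < k)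
    (N K : ℕ) :
    ∑ i ∈ Finset.range (N * h), ∑ j ∈ Finset.range (K * k), w i j * c (i / h) (j / k) =
      ∑ u ∈ Finset.range N, ∑ v ∈ Finset.range K, blockSum w h k u v * c u v := by
  rw [sum_range_mul_eq_sum_sum]
  refine Finset.sum_congr rfl fun u _ => ?_
  simp_rw [sum_range_mul_eq_sum_sum _ K k, blockSum, Finset.sum_mul]
  rw [Finset.sum_comm]
  refine Finset.sum_congr rfl fun v _ => Finset.sum_congr rfl fun i hi =>
    Finset.sum_congr rfl fun j hj => ?_
  rw [Finset.mem_range] at hi hj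
  rw [mul_comm u h, mul_comm v k, Nat.mul_add_div hh, Nat.mul_add_div hk,
    Nat.div_eq_of_lt hi, Nat.div_eq_of_lt hj, add_zero, add_zero]

theorem blockPairing_two_mul_sub (w f : ℕ → ℕ → ℝ) {h k : ℕ} (hh : 0 < h) (hk : 0 < k) (N K : ℕ) :
    blockPairing w f (N * h) (K * k) (2 * h) k - blockPairing w f (N * h) (K * k) h k =
      ∑ v ∈ Finset.range K, ∑ u ∈ Finset.range N,
        blockSum w h k u v * (f (h * (2 * (u / 2))) (k * v) - f (h * u) (k * v)) := by
  rw [Finset.sum_comm, ← sum_mul_comp_div_eq_sum_blockSum_mul w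
    (fun u v => f (h * (2 * (u / 2))) (k * v) - f (h * u) (k * v)) hh hk N K]
  simp_rw [blockPairing, ← Finset.sum_sub_distrib, ← mul_sub, Nat.div_div_eq_div_mul,
    mul_left_comm h 2, mul_comm h 2, mul_assoc]

theorem abs_blockPairing_two_mul_sub_le {w f : ℕ → ℕ → ℝ} {h k : ℕ} {B D : ℝ} (hh : 0 < h)
    (hk : 0 < k) (hf : ∀ j, Antitone fun i => f i j) (hf0 : ∀ i j, 0 ≤ f i j)
    (hB : ∀ j, f 0 j ≤ B) (hD : ∀ u v, |blockSum w h k u v| ≤ D) (N K : ℕ) :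
    |blockPairing w f (N * h) (K * k) (2 * h) k - blockPairing w f (N * h) (K * k) h k| ≤
      K * (B * D) := by
  have hD0 : 0 ≤ D := (abs_nonneg _).trans (hD 0 0)
  have column (v : ℕ) : |∑ u ∈ Finset.range N, blockSum w h k u v *
      (f (h * (2 * (u / 2))) (k * v) - f (h * u) (k * v))| ≤ B * D := by
    have hg : Antitone fun u => f (h * u) (k * v) :=
      fun a b hab => hf _ (Nat.mul_le_mul_left h hab)
    calc _ ≤ ∑ u ∈ Finset.range N, D * (f (h * (2 * (u / 2))) (k * v) - f (h * u) (k * v)) := by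
          refine (Finset.abs_sum_le_sum_abs _ _).trans (Finset.sum_le_sum fun u _ => ?_)
          have hle := sub_nonneg.2 (hg (by omega : 2 * (u / 2) ≤ u))
          rw [abs_mul, abs_of_nonneg hle]
          exact mul_le_mul_of_nonneg_right (hD u v) hle
      _ ≤ D * (f (h * 0) (k * v) - f (h * (N - 1)) (k * v)) := by
          rw [← Finset.mul_sum]
          exact mul_le_mul_of_nonneg_left (sum_comp_two_mul_div_two_sub_le hg N) hD0
      _ ≤ D * B :=
          mul_le_mul_of_nonneg_left ((sub_le_self _ (hf0 _ _)).trans (hB _)) hD0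
      _ = B * D := mul_comm _ _
  rw [blockPairing_two_mul_sub w f hh hk]
  calc _ ≤ ∑ _v ∈ Finset.range K, B * D :=
        (Finset.abs_sum_le_sum_abs _ _).trans (Finset.sum_le_sum fun v _ => column v)
    _ = K * (B * D) := by simp

theorem two_pow_mul_sqrt_le {a b m n : ℕ} (h : n ≤ m) :
    (2 : ℝ) ^ n * √(2 ^ a * 2 ^ b) ≤ √(2 ^ (m + a) * 2 ^ (n + b)) := by
  refine Real.le_sqrt_of_sq_le ?_
  rw [mul_pow, Real.sq_sqrt (by positivity), ← pow_mul, ← pow_add, ← pow_add, ← pow_add]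
  exact pow_le_pow_right₀ one_le_two (by omega)

variable {w f : ℕ → ℕ → ℝ} {M : ℝ}

theorem nonneg_of_abs_blockSum_le
    (hM : ∀ a b u v, |blockSum w (2 ^ a) (2 ^ b) u v| ≤ M * √(2 ^ a * 2 ^ b)) : 0 ≤ M := by
  simpa using (abs_nonneg _).trans (hM 0 0 0 0)

theorem abs_blockPairing_dyadic_sub_le (hf : Antitone (Function.uncurry f))
    (hf0 : ∀ i j, 0 ≤ f i j)
    (hM : ∀ a b u v, |blockSum w (2 ^ a) (2 ^ b) u v| ≤ M * √(2 ^ a * 2 ^ b))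
    {p q s t : ℕ} (hst : s ≤ t + 1) :
    |blockPairing w f (2 ^ p) (2 ^ q) (2 ^ (p - t)) (2 ^ (q - s)) -
      blockPairing w f (2 ^ p) (2 ^ q) (2 ^ (p - (t + 1))) (2 ^ (q - s))| ≤
      f 0 0 * M * √(2 ^ p * 2 ^ q) := by
  have hB0 := hf0 0 0
  have hM0 := nonneg_of_abs_blockSum_le hM
  rcases le_or_gt p t with hpt | hpt
  · rw [Nat.sub_eq_zero_of_le hpt, Nat.sub_eq_zero_of_le (hpt.trans (Nat.le_succ t)), sub_self,
      abs_zero]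
    positivity
  obtain ⟨a, rfl⟩ := Nat.exists_eq_add_of_lt hpt
  obtain ⟨b, n, rfl, hb, hn⟩ : ∃ b n, q = n + b ∧ q - s = b ∧ n ≤ t + 1 :=
    ⟨q - s, q - (q - s), by omega, rfl, by omega⟩
  rw [hb, show t + a + 1 - t = a + 1 by omega, show t + a + 1 - (t + 1) = a by omega,
    show t + a + 1 = t + 1 + a by omega]
  have key := abs_blockPairing_two_mul_sub_le (pow_pos two_pos a) (pow_pos two_pos b)
    (fun j i i' hi => hf (show (i, j) ≤ (i', j) from ⟨hi, le_rfl⟩)) hf0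
    (fun j => hf (show (0, 0) ≤ (0, j) from ⟨le_rfl, j.zero_le⟩)) (hM a b) (2 ^ (t + 1)) (2 ^ n)
  rw [← pow_add, ← pow_add, ← pow_succ'] at key
  calc _ ≤ _ := key
    _ = f 0 0 * M * (2 ^ n * √(2 ^ a * 2 ^ b)) := by push_cast [Function.uncurry]; ring
    _ ≤ _ := mul_le_mul_of_nonneg_left (two_pow_mul_sqrt_le hn) (by positivity)

theorem abs_sum_mul_le_of_abs_blockSum_le (hf : Antitone (Function.uncurry f))
    (hf0 : ∀ i j, 0 ≤ f i j)
    (hM : ∀ a b u v, |blockSum w (2 ^ a) (2 ^ b) u v| ≤ M * √(2 ^ a * 2 ^ b)) (p q : ℕ) :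
    |∑ i ∈ Finset.range (2 ^ p), ∑ j ∈ Finset.range (2 ^ q), w i j * f i j| ≤
      (2 * (max p q : ℕ) + 1) * (f 0 0 * M * √(2 ^ p * 2 ^ q)) := by
  have hf' : Antitone (Function.uncurry (Function.swap f)) :=
    hf.comp_monotone (f := Prod.swap) fun _ _ hxy => Prod.swap_le_swap.2 hxy
  have hM' (a b u v : ℕ) :
      |blockSum (Function.swap w) (2 ^ a) (2 ^ b) u v| ≤ M * √(2 ^ a * 2 ^ b) := by
    rw [blockSum_swap, mul_comm ((2 : ℝ) ^ a)]
    exact hM b a v u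
  -- Halving the rows costs one block sum per column of blocks, which is affordable only when there
  -- are at least as many rows of blocks as columns: rows and columns are refined alternately.
  have scale (t : ℕ) : |blockPairing w f (2 ^ p) (2 ^ q) (2 ^ (p - t)) (2 ^ (q - t))| ≤
      (2 * t + 1) * (f 0 0 * M * √(2 ^ p * 2 ^ q)) := by
    induction t with
    | zero =>
      rw [Nat.sub_zero, Nat.sub_zero, blockPairing_self, abs_mul, abs_of_nonneg (hf0 0 0)]
      simpa [mul_assoc, mul_comm, mul_left_comm] using
        mul_le_mul_of_nonneg_right (hM p q 0 0) (hf0 0 0)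
    | succ t ih =>
      have rows := abs_blockPairing_dyadic_sub_le hf hf0 hM (p := p) (q := q) t.le_succ
      have columns := abs_blockPairing_dyadic_sub_le hf' (fun i j => hf0 j i) hM' (p := q) (q := p)
        (le_refl (t + 1))
      rw [blockPairing_swap w f, blockPairing_swap w f, mul_comm ((2 : ℝ) ^ q)] at columns
      change _ ≤ f 0 0 * M * _ at columns
      rw [abs_le] at *
      push_cast
      constructor <;> linarith
  simpa only [Nat.sub_eq_zero_of_le (le_max_left p q), Nat.sub_eq_zero_of_le (le_max_right p q),
    pow_zero, blockPairing_one_one] using scale (max p q)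

end DyadicChaining

/-- All sums of `ε` over finite rectangles (products of order-convex sets) are at most `M` times
the square root of the area. -/
def IsRectSumBounded {α β : Type*} [Preorder α] [Preorder β] (ε : α → β → ℝ) (M : ℝ) : Prop :=
  ∀ (s : Finset α) (t : Finset β), (s : Set α).OrdConnected → (t : Set β).OrdConnected →
    |∑ a ∈ s, ∑ b ∈ t, ε a b| ≤ M * √(s.card * t.card)

section Peeling

theorem sum_range_two_pow_sub_one (F : ℕ → ℝ) (L : ℕ) :
    ∑ i ∈ Finset.range (2 ^ L - 1), F i =
      ∑ a ∈ Finset.range L, ∑ i ∈ Finset.range (2 ^ a), F (2 ^ a - 1 + i) := by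
  induction L with
  | zero => simp
  | succ L ih =>
    have hL := Nat.one_le_two_pow (n := L)
    rw [Finset.sum_range_succ, ← ih, ← Finset.sum_range_add, pow_succ]
    congr 2
    omega

variable {w f : ℕ → ℕ → ℝ} {M : ℝ}

theorem IsRectSumBounded.abs_blockSum_le (hw : IsRectSumBounded w M) (x y h k u v : ℕ) :
    |blockSum (fun i j => w (x + i) (y + j)) h k u v| ≤ M * √(h * k) := by
  have key := hw (.Ico (x + u * h) (x + u * h + h)) (.Ico (y + v * k) (y + v * k + k))
    (by simpa using Set.ordConnected_Ico) (by simpa using Set.ordConnected_Ico)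
  simp only [Finset.sum_Ico_eq_sum_range, Nat.card_Ico, Nat.add_sub_cancel_left] at key
  simpa only [blockSum, add_assoc] using key

theorem mul_apply_sq_le_sum_sq (hf : Antitone (Function.uncurry f)) (hf0 : ∀ i j, 0 ≤ f i j)
    {i j m n : ℕ} (hi : i < m) (hj : j < n) :
    (i + 1) * (j + 1) * f i j ^ 2 ≤
      ∑ i ∈ Finset.range m, ∑ j ∈ Finset.range n, f i j ^ 2 := by
  calc (i + 1) * (j + 1) * f i j ^ 2
      = ∑ _i ∈ Finset.range (i + 1), ∑ _j ∈ Finset.range (j + 1), f i j ^ 2 := by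
        simp [mul_assoc]
    _ ≤ ∑ i ∈ Finset.range (i + 1), ∑ j ∈ Finset.range (j + 1), f i j ^ 2 := by
        refine Finset.sum_le_sum fun i' hi' => Finset.sum_le_sum fun j' hj' => ?_
        exact pow_le_pow_left₀ (hf0 i j) (hf (show (i', j') ≤ (i, j) from
          ⟨Finset.mem_range_succ_iff.1 hi', Finset.mem_range_succ_iff.1 hj'⟩)) 2
    _ ≤ ∑ i ∈ Finset.range m, ∑ j ∈ Finset.range (j + 1), f i j ^ 2 :=
        Finset.sum_le_sum_of_subset_of_nonneg (Finset.range_mono hi)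
          fun _ _ _ => Finset.sum_nonneg fun _ _ => sq_nonneg _
    _ ≤ _ := Finset.sum_le_sum fun _ _ =>
        Finset.sum_le_sum_of_subset_of_nonneg (Finset.range_mono hj) fun _ _ _ => sq_nonneg _

theorem abs_sum_dyadic_piece_le (hw : IsRectSumBounded w M) (hf : Antitone (Function.uncurry f))
    (hf0 : ∀ i j, 0 ≤ f i j) {a b L : ℕ} (ha : a < L) (hb : b < L) :
    |∑ i ∈ Finset.range (2 ^ a), ∑ j ∈ Finset.range (2 ^ b),
        w (2 ^ a - 1 + i) (2 ^ b - 1 + j) * f (2 ^ a - 1 + i) (2 ^ b - 1 + j)| ≤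
      2 * L * (M * √(∑ i ∈ Finset.range (2 ^ L - 1), ∑ j ∈ Finset.range (2 ^ L - 1),
        f i j ^ 2)) := by
  set V := ∑ i ∈ Finset.range (2 ^ L - 1), ∑ j ∈ Finset.range (2 ^ L - 1), f i j ^ 2
  have hblock (p q u v : ℕ) :
      |blockSum (fun i j => w (2 ^ a - 1 + i) (2 ^ b - 1 + j)) (2 ^ p) (2 ^ q) u v| ≤
        M * √(2 ^ p * 2 ^ q) := by
    exact_mod_cast hw.abs_blockSum_le (2 ^ a - 1) (2 ^ b - 1) (2 ^ p) (2 ^ q) u v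
  have hM0 : 0 ≤ M := nonneg_of_abs_blockSum_le hblock
  have corner_nonneg := hf0 (2 ^ a - 1) (2 ^ b - 1)
  have corner : f (2 ^ a - 1) (2 ^ b - 1) * √(2 ^ a * 2 ^ b) ≤ √V := by
    have lt_of {c : ℕ} (hc : c < L) : 2 ^ c - 1 < 2 ^ L - 1 :=
      Nat.sub_lt_sub_right Nat.one_le_two_pow (Nat.pow_lt_pow_right one_lt_two hc)
    have key := mul_apply_sq_le_sum_sq hf hf0 (lt_of ha) (lt_of hb)
    rw [Nat.cast_pred (by positivity), Nat.cast_pred (by positivity)] at key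
    refine Real.le_sqrt_of_sq_le ?_
    rw [mul_pow, Real.sq_sqrt (by positivity)]
    simpa [mul_comm] using key
  have chaining := abs_sum_mul_le_of_abs_blockSum_le
    (f := fun i j => f (2 ^ a - 1 + i) (2 ^ b - 1 + j))
    (fun x y hxy => hf (show (_, _) ≤ (_, _) from
      ⟨Nat.add_le_add_left hxy.1 _, Nat.add_le_add_left hxy.2 _⟩))
    (fun i j => hf0 _ _) hblock a b
  have hmax : (2 * (max a b : ℕ) + 1 : ℝ) ≤ 2 * L := by
    exact_mod_cast (show 2 * max a b + 1 ≤ 2 * L by omega)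
  calc _ ≤ (2 * (max a b : ℕ) + 1) *
        (M * (f (2 ^ a - 1) (2 ^ b - 1) * √(2 ^ a * 2 ^ b))) := by
        refine chaining.trans_eq ?_
        simp only [add_zero]
        ring
    _ ≤ 2 * L * (M * √V) := by gcongr

theorem abs_sum_antitone_mul_le (hw : IsRectSumBounded w M) (hf : Antitone (Function.uncurry f))
    (hf0 : ∀ i j, 0 ≤ f i j) (L : ℕ) :
    |∑ i ∈ Finset.range (2 ^ L - 1), ∑ j ∈ Finset.range (2 ^ L - 1), w i j * f i j| ≤
      2 * L ^ 3 * (M * √(∑ i ∈ Finset.range (2 ^ L - 1), ∑ j ∈ Finset.range (2 ^ L - 1),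
        f i j ^ 2)) := by
  have peel : ∑ i ∈ Finset.range (2 ^ L - 1), ∑ j ∈ Finset.range (2 ^ L - 1), w i j * f i j =
      ∑ a ∈ Finset.range L, ∑ b ∈ Finset.range L, ∑ i ∈ Finset.range (2 ^ a),
        ∑ j ∈ Finset.range (2 ^ b),
          w (2 ^ a - 1 + i) (2 ^ b - 1 + j) * f (2 ^ a - 1 + i) (2 ^ b - 1 + j) := by
    simp_rw [sum_range_two_pow_sub_one]
    exact Finset.sum_congr rfl fun a _ => Finset.sum_comm
  rw [peel]
  calc _ ≤ ∑ _a ∈ Finset.range L, ∑ _b ∈ Finset.range L,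
        2 * L * (M * √(∑ i ∈ Finset.range (2 ^ L - 1), ∑ j ∈ Finset.range (2 ^ L - 1),
          f i j ^ 2)) := by
        refine (Finset.abs_sum_le_sum_abs _ _).trans (Finset.sum_le_sum fun a ha => ?_)
        refine (Finset.abs_sum_le_sum_abs _ _).trans (Finset.sum_le_sum fun b hb => ?_)
        exact abs_sum_dyadic_piece_le hw hf hf0 (Finset.mem_range.1 ha) (Finset.mem_range.1 hb)
    _ = _ := by
        simp only [Finset.sum_const, Finset.card_range, nsmul_eq_mul]
        ring

end Peeling

section Padding

variable {α β : Type*} [LinearOrder α] [LinearOrder β]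

/-- The values of `F` along the increasing enumeration of `s`, followed by zeros. -/
def pad {E : Type*} [Zero E] (s : Finset α) (F : α → E) (i : ℕ) : E :=
  if h : i < s.card then F (s.orderEmbOfFin rfl ⟨i, h⟩) else 0

/-- The array `F` restricted to `s × t`, reindexed from the corner `(0, 0)` of `ℕ × ℕ` and extended
by zero. -/
def pad₂ (s : Finset α) (t : Finset β) (F : α → β → ℝ) : ℕ → ℕ → ℝ :=
  pad s fun a => pad t (F a)

/-- The elements of `s` whose position in the increasing enumeration of `s` lies in `S`. -/
def slice (s : Finset α) (S : Finset ℕ) : Finset α :=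
  (Finset.univ.filter fun i : Fin s.card => (i : ℕ) ∈ S).map (s.orderEmbOfFin rfl).toEmbedding

theorem mem_slice {s : Finset α} {S : Finset ℕ} {a : α} :
    a ∈ slice s S ↔ ∃ i : Fin s.card, (i : ℕ) ∈ S ∧ s.orderEmbOfFin rfl i = a := by
  simp [slice]

theorem exists_orderEmbOfFin_eq {s : Finset α} {a : α} (ha : a ∈ s) :
    ∃ i, s.orderEmbOfFin rfl i = a :=
  Set.mem_range.1 ((s.range_orderEmbOfFin rfl).symm ▸ ha)

theorem slice_range_of_card_le {s : Finset α} {N : ℕ} (h : s.card ≤ N) :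
    slice s (Finset.range N) = s := by
  rw [slice, Finset.filter_true_of_mem fun i _ => Finset.mem_range.2 (i.2.trans_le h),
    s.map_orderEmbOfFin_univ]

theorem card_slice_le (s : Finset α) (S : Finset ℕ) : (slice s S).card ≤ S.card := by
  rw [slice, Finset.card_map]
  exact Finset.card_le_card_of_injOn _ (fun i hi => (Finset.mem_filter.1 hi).2)
    Fin.val_injective.injOn

theorem ordConnected_slice {s : Finset α} {S : Finset ℕ} (hs : (s : Set α).OrdConnected)
    (hS : (S : Set ℕ).OrdConnected) : (slice s S : Set α).OrdConnected := by
  refine ⟨fun x hx y hy z hz => ?_⟩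
  obtain ⟨i, hi, rfl⟩ := mem_slice.1 hx
  obtain ⟨j, hj, rfl⟩ := mem_slice.1 hy
  obtain ⟨k, rfl⟩ := exists_orderEmbOfFin_eq
    (hs.out (s.orderEmbOfFin_mem rfl i) (s.orderEmbOfFin_mem rfl j) hz)
  simp only [Set.mem_Icc, OrderEmbedding.le_iff_le] at hz
  exact mem_slice.2 ⟨k, hS.out hi hj hz, rfl⟩

theorem sum_pad {E : Type*} [AddCommMonoid E] (s : Finset α) (F : α → E) (S : Finset ℕ) :
    ∑ i ∈ S, pad s F i = ∑ a ∈ slice s S, F a := by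
  have enumerate (i : Fin s.card) : F (s.orderEmbOfFin rfl i) = pad s F i := by simp [pad]
  have support : ∀ i ∈ S, i ∉ Finset.range s.card → pad s F i = 0 := fun i _ hi =>
    dif_neg (mt Finset.mem_range.2 hi)
  simp only [slice, Finset.sum_map, RelEmbedding.coe_toEmbedding, enumerate, Finset.sum_filter]
  rw [Fin.sum_univ_eq_sum_range fun i => if i ∈ S then pad s F i else 0, ← Finset.sum_filter,
    Finset.filter_mem_eq_inter, Finset.inter_comm, ← Finset.filter_mem_eq_inter,
    Finset.sum_filter_of_ne fun i hi hne => by_contra fun h => hne (support i hi h)]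

theorem sum_pad₂ (s : Finset α) (t : Finset β) (F : α → β → ℝ) (S T : Finset ℕ) :
    ∑ i ∈ S, ∑ j ∈ T, pad₂ s t F i j = ∑ a ∈ slice s S, ∑ b ∈ slice t T, F a b := by
  simp_rw [Finset.sum_comm (s := S), pad₂, ← Finset.sum_apply, sum_pad, Finset.sum_apply,
    Finset.sum_comm (s := T), sum_pad]

theorem pad₂_mul (s : Finset α) (t : Finset β) (F G : α → β → ℝ) (i j : ℕ) :
    pad₂ s t (fun a b => F a b * G a b) i j = pad₂ s t F i j * pad₂ s t G i j := by
  by_cases hi : i < s.card <;> by_cases hj : j < t.card <;> simp [pad₂, pad, hi, hj]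

theorem pad₂_nonneg {s : Finset α} {t : Finset β} {F : α → β → ℝ} (hF : ∀ a b, 0 ≤ F a b)
    (i j : ℕ) : 0 ≤ pad₂ s t F i j := by
  by_cases hi : i < s.card <;> by_cases hj : j < t.card <;> simp [pad₂, pad, hi, hj, hF]

theorem antitone_uncurry_pad₂ {s : Finset α} {t : Finset β} {F : α → β → ℝ}
    (hF : ∀ a b, 0 ≤ F a b)
    (hanti : AntitoneOn (Function.uncurry F) ((s : Set α) ×ˢ (t : Set β))) :
    Antitone (Function.uncurry (pad₂ s t F)) := by
  rintro ⟨i, j⟩ ⟨i', j'⟩ ⟨hi, hj⟩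
  simp only [Function.uncurry_apply_pair] at hi hj ⊢
  by_cases hi' : i' < s.card
  · by_cases hj' : j' < t.card
    · simp only [pad₂, pad, hi', hj', hi.trans_lt hi', hj.trans_lt hj', dif_pos]
      exact hanti (a := (_, _)) (b := (_, _))
        ⟨s.orderEmbOfFin_mem rfl _, t.orderEmbOfFin_mem rfl _⟩
        ⟨s.orderEmbOfFin_mem rfl _, t.orderEmbOfFin_mem rfl _⟩
        ⟨(s.orderEmbOfFin rfl).monotone hi, (t.orderEmbOfFin rfl).monotone hj⟩
    · simpa [pad₂, pad, hi', hj'] using pad₂_nonneg hF i j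
  · simpa [pad₂, pad, hi'] using pad₂_nonneg hF i j

theorem IsRectSumBounded.pad₂ {ε : α → β → ℝ} {M : ℝ} (hε : IsRectSumBounded ε M) (hM : 0 ≤ M)
    {s : Finset α} {t : Finset β} (hs : (s : Set α).OrdConnected)
    (ht : (t : Set β).OrdConnected) : IsRectSumBounded (pad₂ s t ε) M := by
  intro S T hS hT
  rw [sum_pad₂]
  calc _ ≤ M * √((slice s S).card * (slice t T).card) :=
        hε _ _ (ordConnected_slice hs hS) (ordConnected_slice ht hT)
    _ ≤ M * √(S.card * T.card) := by gcongr <;> apply card_slice_le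

end Padding

section MonotonePairing

variable {α β : Type*} [LinearOrder α] [LinearOrder β] {ε f : α → β → ℝ} {M : ℝ}
  {s : Finset α} {t : Finset β} {L : ℕ}

theorem abs_sum_antitoneOn_mul_le (hε : IsRectSumBounded ε M) (hM : 0 ≤ M)
    (hs : (s : Set α).OrdConnected) (ht : (t : Set β).OrdConnected) (hsL : s.card < 2 ^ L)
    (htL : t.card < 2 ^ L) (hf0 : ∀ a b, 0 ≤ f a b)
    (hf : AntitoneOn (Function.uncurry f) ((s : Set α) ×ˢ (t : Set β))) :
    |∑ a ∈ s, ∑ b ∈ t, ε a b * f a b| ≤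
      2 * L ^ 3 * (M * √(∑ a ∈ s, ∑ b ∈ t, f a b ^ 2)) := by
  have key := abs_sum_antitone_mul_le (hε.pad₂ hM hs ht) (antitone_uncurry_pad₂ hf0 hf)
    (pad₂_nonneg hf0) L
  simpa only [pow_two, ← pad₂_mul, sum_pad₂, slice_range_of_card_le (Nat.le_sub_one_of_lt hsL),
    slice_range_of_card_le (Nat.le_sub_one_of_lt htL)] using key

theorem IsRectSumBounded.dual (hε : IsRectSumBounded ε M) :
    IsRectSumBounded (α := αᵒᵈ) (β := βᵒᵈ) ε M :=
  fun s t hs ht => hε s t hs.dual ht.dual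

theorem abs_sum_monotoneOn_mul_le (hε : IsRectSumBounded ε M) (hM : 0 ≤ M)
    (hs : (s : Set α).OrdConnected) (ht : (t : Set β).OrdConnected) (hsL : s.card < 2 ^ L)
    (htL : t.card < 2 ^ L)
    (hf : MonotoneOn (Function.uncurry f) ((s : Set α) ×ˢ (t : Set β))) :
    |∑ a ∈ s, ∑ b ∈ t, ε a b * f a b| ≤
      4 * L ^ 3 * M * √(∑ a ∈ s, ∑ b ∈ t, f a b ^ 2) := by
  have hpos := abs_sum_antitoneOn_mul_le (α := αᵒᵈ) (β := βᵒᵈ) (f := fun a b => (f a b)⁺) hε.dual hM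
    hs.dual ht.dual hsL htL (fun a b => posPart_nonneg _)
    (fun x hx y hy hxy => posPart_mono (hf hy hx hxy))
  have hneg := abs_sum_antitoneOn_mul_le (f := fun a b => (f a b)⁻) hε hM hs ht hsL htL
    (fun a b => negPart_nonneg _) (fun x hx y hy hxy => negPart_anti (hf hx hy hxy))
  have norm_le {g : α → β → ℝ} (hg0 : ∀ a b, 0 ≤ g a b) (hg : ∀ a b, g a b ≤ |f a b|) :
      √(∑ a ∈ s, ∑ b ∈ t, g a b ^ 2) ≤ √(∑ a ∈ s, ∑ b ∈ t, f a b ^ 2) := by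
    simp_rw [← sq_abs (f _ _)]
    gcongr with a _ b _
    exacts [hg0 a b, hg a b]
  have split : ∑ a ∈ s, ∑ b ∈ t, ε a b * f a b =
      ∑ a ∈ s, ∑ b ∈ t, ε a b * (f a b)⁺ - ∑ a ∈ s, ∑ b ∈ t, ε a b * (f a b)⁻ := by
    simp_rw [← Finset.sum_sub_distrib, ← mul_sub, posPart_sub_negPart]
  rw [split]
  calc _ ≤ _ := (abs_sub _ _).trans (add_le_add hpos hneg)
    _ ≤ 2 * L ^ 3 * (M * √(∑ a ∈ s, ∑ b ∈ t, f a b ^ 2)) +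
        2 * L ^ 3 * (M * √(∑ a ∈ s, ∑ b ∈ t, f a b ^ 2)) := by
        gcongr 2 * (L : ℝ) ^ 3 * (M * ?_) + 2 * (L : ℝ) ^ 3 * (M * ?_)
        · exact norm_le (fun a b => posPart_nonneg _) fun a b =>
            (le_add_of_nonneg_right (negPart_nonneg _)).trans_eq (posPart_add_negPart _)
        · exact norm_le (fun a b => negPart_nonneg _) fun a b =>
            (le_add_of_nonneg_left (posPart_nonneg _)).trans_eq (posPart_add_negPart _)
    _ = _ := by ring

end MonotonePairing

section Projection

variable {n1 n2 : ℕ} {K : Set (Fin n1 → Fin n2 → ℝ)} {v p : Fin n1 → Fin n2 → ℝ}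

theorem frobSq_nonneg (v : Fin n1 → Fin n2 → ℝ) : 0 ≤ frobSq v :=
  Finset.sum_nonneg fun _ _ => Finset.sum_nonneg fun _ _ => sq_nonneg _

theorem continuous_frobSq : Continuous (frobSq : (Fin n1 → Fin n2 → ℝ) → ℝ) := by
  unfold frobSq
  fun_prop

theorem norm_le_sqrt_frobSq (v : Fin n1 → Fin n2 → ℝ) : ‖v‖ ≤ √(frobSq v) := by
  simp only [pi_norm_le_iff_of_nonneg (Real.sqrt_nonneg _), Real.norm_eq_abs]
  refine fun i j => Real.abs_le_sqrt ?_
  calc v i j ^ 2 ≤ ∑ j, v i j ^ 2 :=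
        Finset.single_le_sum (fun j _ => sq_nonneg (v i j)) (Finset.mem_univ j)
    _ ≤ frobSq v := Finset.single_le_sum (f := fun i => ∑ j, v i j ^ 2)
        (fun i _ => Finset.sum_nonneg fun j _ => sq_nonneg (v i j)) (Finset.mem_univ i)

theorem tendsto_frobSq_cocompact_atTop :
    Filter.Tendsto (frobSq : (Fin n1 → Fin n2 → ℝ) → ℝ) (Filter.cocompact _) Filter.atTop :=
  Filter.tendsto_atTop_mono
    (fun v => (Real.le_sqrt (norm_nonneg v) (frobSq_nonneg v)).1 (norm_le_sqrt_frobSq v))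
    ((Filter.tendsto_pow_atTop two_ne_zero).comp tendsto_norm_cocompact_atTop)

theorem exists_mem_forall_frobSq_sub_le (hK : IsClosed K) (hne : K.Nonempty)
    (v : Fin n1 → Fin n2 → ℝ) : ∃ p ∈ K, ∀ u ∈ K, frobSq (v - p) ≤ frobSq (v - u) := by
  obtain ⟨u₀, hu₀⟩ := hne
  have coercive : Filter.Tendsto (fun u => frobSq (v - u)) (Filter.cocompact _) Filter.atTop :=
    tendsto_frobSq_cocompact_atTop.comp (Homeomorph.subLeft v).isClosedEmbedding.tendsto_cocompact
  exact (continuous_frobSq.comp (continuous_const.sub continuous_id)).continuousOn.exists_isMinOn'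
    hK hu₀ (Filter.Eventually.filter_mono inf_le_left (coercive.eventually_ge_atTop _))

theorem projC_spec (hK : IsClosed K) (hne : K.Nonempty) (v : Fin n1 → Fin n2 → ℝ) :
    projC K v ∈ K ∧ ∀ u ∈ K, frobSq (v - projC K v) ≤ frobSq (v - u) :=
  Classical.epsilon_spec (exists_mem_forall_frobSq_sub_le hK hne v)

theorem frobSq_sub_smul (v p : Fin n1 → Fin n2 → ℝ) (t : ℝ) :
    frobSq (v - t • p) = frobSq v - 2 * t * ∑ i, ∑ j, v i j * p i j + t ^ 2 * frobSq p := by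
  simp only [frobSq, Finset.mul_sum, ← Finset.sum_sub_distrib, ← Finset.sum_add_distrib,
    Pi.sub_apply, Pi.smul_apply, smul_eq_mul]
  refine Finset.sum_congr rfl fun i _ => Finset.sum_congr rfl fun j _ => ?_
  ring

theorem frobSq_eq_sum_mul_of_forall_le (h : ∀ t : ℝ, 0 < t → frobSq (v - p) ≤ frobSq (v - t • p)) :
    frobSq p = ∑ i, ∑ j, v i j * p i j := by
  have hmin : IsLocalMin (fun t : ℝ => frobSq (v - t • p)) 1 := by
    filter_upwards [lt_mem_nhds one_pos] with t ht
    simpa using h t ht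
  simp only [frobSq_sub_smul] at hmin
  have hderiv := hmin.hasDerivAt_eq_zero <| ((((hasDerivAt_id (1 : ℝ)).const_mul 2).mul_const
    (∑ i, ∑ j, v i j * p i j)).const_sub (frobSq v)).add
    ((hasDerivAt_pow 2 (1 : ℝ)).mul_const (frobSq p))
  norm_num at hderiv
  linarith

end Projection

section TangentCone

variable {n1 n2 : ℕ} {θ p ε : Fin n1 → Fin n2 → ℝ} {P : Finset (Set (Fin n1 × Fin n2))} {M : ℝ}

theorem tangentCone_nonempty (θ : Fin n1 → Fin n2 → ℝ) : (tangentCone θ).Nonempty :=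
  ⟨_, subset_closure ⟨1, one_pos, 0, fun _ _ _ _ _ _ => le_rfl, rfl⟩⟩

theorem smul_mem_tangentCone (hp : p ∈ tangentCone θ) {t : ℝ} (ht : 0 < t) :
    t • p ∈ tangentCone θ := by
  refine map_mem_closure (continuous_const_smul t) hp ?_
  rintro _ ⟨α, hα, u, hu, rfl⟩
  exact ⟨t * α, mul_pos ht hα, u, hu, smul_smul t α _⟩

theorem le_of_mem_tangentCone (hp : p ∈ tangentCone θ) {i k : Fin n1} {j l : Fin n2}
    (hik : i ≤ k) (hjl : j ≤ l) (hθ : θ i j = θ k l) : p i j ≤ p k l := by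
  have hclosed : IsClosed {q : Fin n1 → Fin n2 → ℝ | q i j ≤ q k l} :=
    isClosed_le (by fun_prop) (by fun_prop)
  refine closure_minimal ?_ hclosed hp
  rintro _ ⟨α, hα, u, hu, rfl⟩
  simp only [Set.mem_ofPred_eq, Pi.smul_apply, Pi.sub_apply, smul_eq_mul, hθ]
  exact mul_le_mul_of_nonneg_left (sub_le_sub_right (hu hik hjl) _) hα.le

theorem frobSq_projC_tangentCone (θ ε : Fin n1 → Fin n2 → ℝ) :
    frobSq (projC (tangentCone θ) ε) = ∑ i, ∑ j, ε i j * projC (tangentCone θ) ε i j :=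
  have ⟨hmem, hmin⟩ := projC_spec isClosed_closure (tangentCone_nonempty θ) ε
  frobSq_eq_sum_mul_of_forall_le fun _ ht => hmin _ (smul_mem_tangentCone hmem ht)

theorem IsRect.exists_ordConnected {A : Set (Fin n1 × Fin n2)} (hA : IsRect A) :
    ∃ (s : Finset (Fin n1)) (t : Finset (Fin n2)),
      (s : Set (Fin n1)).OrdConnected ∧ (t : Set (Fin n2)).OrdConnected ∧
        A = (s : Set (Fin n1)) ×ˢ (t : Set (Fin n2)) := by
  obtain ⟨k1, l1, k2, l2, -, -, rfl⟩ := hA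
  refine ⟨.Icc k1 l1, .Icc k2 l2, ?_, ?_, ?_⟩
  · simpa using Set.ordConnected_Icc
  · simpa using Set.ordConnected_Icc
  · ext
    simp only [Set.mem_ofPred_eq, Finset.coe_Icc, Set.mem_prod, Set.mem_Icc, and_assoc]

theorem IsRectPartition.sum_eq_sum_rectangles (hP : IsRectPartition P)
    {s : Set (Fin n1 × Fin n2) → Finset (Fin n1)} {t : Set (Fin n1 × Fin n2) → Finset (Fin n2)}
    (hst : ∀ A ∈ P, A = (s A : Set (Fin n1)) ×ˢ (t A : Set (Fin n2))) (F : Fin n1 → Fin n2 → ℝ) :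
    ∑ i, ∑ j, F i j = ∑ A ∈ P, ∑ i ∈ s A, ∑ j ∈ t A, F i j := by
  classical
  have hcover : P.biUnion (fun A => s A ×ˢ t A) = Finset.univ := by
    refine Finset.eq_univ_of_forall fun x => ?_
    obtain ⟨A, hA, hx⟩ := hP.2.2 x
    rw [hst A hA] at hx
    exact Finset.mem_biUnion.2 ⟨A, hA, by simpa using hx⟩
  have hdisjoint : (P : Set (Set (Fin n1 × Fin n2))).PairwiseDisjoint fun A => s A ×ˢ t A := by
    intro A hA B hB hAB
    rw [Function.onFun, ← Finset.disjoint_coe, Finset.coe_product, Finset.coe_product,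
      ← hst A hA, ← hst B hB]
    exact hP.2.1 A hA B hB hAB
  simp_rw [← Finset.sum_product', ← Finset.sum_biUnion hdisjoint, hcover, Finset.univ_product_univ]

theorem frobSq_projC_tangentCone_le (hP : IsRectPartition P) (hθ : ConstOnPartition θ P)
    (hε : IsRectSumBounded ε M) (hM : 0 ≤ M) {L : ℕ} (hL1 : n1 < 2 ^ L) (hL2 : n2 < 2 ^ L) :
    frobSq (projC (tangentCone θ) ε) ≤ P.card * (4 * L ^ 3 * M) ^ 2 := by
  set p := projC (tangentCone θ) ε with hp
  have hpmem : p ∈ tangentCone θ := (projC_spec isClosed_closure (tangentCone_nonempty θ) ε).1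
  choose! s t hs ht hst using fun A hA => (hP.1 A hA).exists_ordConnected
  have rectangle : ∀ A ∈ P, 2 * ∑ i ∈ s A, ∑ j ∈ t A, ε i j * p i j ≤
      (4 * L ^ 3 * M) ^ 2 + ∑ i ∈ s A, ∑ j ∈ t A, p i j ^ 2 := by
    intro A hA
    have hmono :
        MonotoneOn (Function.uncurry p) ((s A : Set (Fin n1)) ×ˢ (t A : Set (Fin n2))) := by
      rw [← hst A hA]
      exact fun x hx y hy hxy => le_of_mem_tangentCone hpmem hxy.1 hxy.2 (hθ A hA x hx y hy)
    have hpair := (le_abs_self _).trans <| abs_sum_monotoneOn_mul_le hε hM (hs A hA) (ht A hA)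
      ((card_finset_fin_le _).trans_lt hL1) ((card_finset_fin_le _).trans_lt hL2) hmono
    have hsq := Real.sq_sqrt (show 0 ≤ ∑ i ∈ s A, ∑ j ∈ t A, p i j ^ 2 from
      Finset.sum_nonneg fun _ _ => Finset.sum_nonneg fun _ _ => sq_nonneg _)
    linarith [two_mul_le_add_sq (4 * L ^ 3 * M) √(∑ i ∈ s A, ∑ j ∈ t A, p i j ^ 2)]
  have total := Finset.sum_le_sum rectangle
  rw [← Finset.mul_sum, Finset.sum_add_distrib, ← hP.sum_eq_sum_rectangles hst,
    ← hP.sum_eq_sum_rectangles hst, ← frobSq_projC_tangentCone, ← frobSq, ← hp,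
    Finset.sum_const, nsmul_eq_mul] at total
  linarith

end TangentCone

section MaximalInequality

theorem sq_le_two_mul_sq_add_exp (ℓ x : ℝ) :
    x ^ 2 ≤ 2 * ℓ ^ 2 + 2 * ((Real.exp (2 * x) + Real.exp (-(2 * x))) * Real.exp (-(2 * ℓ))) := by
  have hlin : |x| ≤ ℓ + Real.exp (|x| - ℓ) := by linarith [Real.add_one_le_exp (|x| - ℓ)]
  have hexp : Real.exp (|x| - ℓ) ^ 2 = Real.exp (|2 * x|) * Real.exp (-(2 * ℓ)) := by
    rw [← Real.exp_nat_mul, ← Real.exp_add, abs_mul, abs_two]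
    push_cast
    ring_nf
  calc x ^ 2 = |x| ^ 2 := (sq_abs x).symm
    _ ≤ (ℓ + Real.exp (|x| - ℓ)) ^ 2 := pow_le_pow_left₀ (abs_nonneg x) hlin 2
    _ ≤ 2 * (ℓ ^ 2 + Real.exp (|x| - ℓ) ^ 2) := add_sq_le
    _ ≤ _ := by
      rw [hexp, mul_add]
      gcongr
      exact Real.exp_abs_le (2 * x)

theorem sq_le_two_div_mul_add_sum_exp {ι : Type*} [Fintype ι] (x : ι → ℝ) (ℓ : ℝ) {t : ℝ}
    (ht : t ≠ 0) (i : ι) :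
    x i ^ 2 ≤ 2 / t ^ 2 * (ℓ ^ 2 +
      (∑ i, (Real.exp (2 * t * x i) + Real.exp (-(2 * t * x i)))) * Real.exp (-(2 * ℓ))) := by
  have hle := Finset.single_le_sum
    (f := fun i => Real.exp (2 * t * x i) + Real.exp (-(2 * t * x i)))
    (fun i _ => by positivity) (Finset.mem_univ i)
  have key := sq_le_two_mul_sq_add_exp ℓ (t * x i)
  rw [mul_pow, ← mul_assoc 2 t, ← mul_add] at key
  rw [div_mul_eq_mul_div, le_div_iff₀' (by positivity)]
  exact key.trans (by gcongr)

variable {Ω ι : Type*} [MeasurableSpace Ω] {μ : Measure Ω} {c : NNReal}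

theorem hasSubgaussianMGF_of_le {X : Ω → ℝ} {d : NNReal} (h : HasSubgaussianMGF X c μ)
    (hcd : c ≤ d) : HasSubgaussianMGF X d μ where
  integrable_exp_mul := h.integrable_exp_mul
  mgf_le t := (h.mgf_le t).trans (by gcongr)

theorem integral_exp_add_exp_neg_le {X : Ω → ℝ} (h : HasSubgaussianMGF X c μ) (t : ℝ) :
    ∫ ω, (Real.exp (t * X ω) + Real.exp (-(t * X ω))) ∂μ ≤ 2 * Real.exp (c * t ^ 2 / 2) := by
  have hpos := h.mgf_le t
  have hneg := h.mgf_le (-t)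
  simp only [mgf, neg_mul, neg_sq] at hpos hneg
  rw [integral_add (h.integrable_exp_mul t) (by simpa using h.integrable_exp_mul (-t))]
  linarith

theorem exists_integrable_forall_sq_le [Fintype ι] [IsProbabilityMeasure μ] {X : ι → Ω → ℝ}
    (hc : 0 < c) (hX : ∀ i, HasSubgaussianMGF (X i) c μ) (hι : 1 < Fintype.card ι) :
    ∃ Y : Ω → ℝ, Integrable Y μ ∧ (∀ i ω, X i ω ^ 2 ≤ Y ω) ∧
      ∫ ω, Y ω ∂μ ≤ c * (4 * Real.log (Fintype.card ι) + 8 / Real.log (Fintype.card ι)) := by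
  set N : ℝ := (Fintype.card ι : ℝ) with hNdef
  set ℓ := Real.log N
  have hℓ : 0 < ℓ := Real.log_pos (Nat.one_lt_cast.2 hι)
  have hN : 0 < N := Nat.cast_pos.2 (zero_lt_one.trans hι)
  -- With this `t` the exponential moments at `2 * t` are at most `2 * N` each, so that the factor
  -- `exp (-(2 * ℓ)) = N⁻²` cancels their sum.
  obtain ⟨t, ht0, ht⟩ : ∃ t : ℝ, t ≠ 0 ∧ t ^ 2 = ℓ / (2 * c) :=
    ⟨√(ℓ / (2 * c)), by positivity, Real.sq_sqrt (by positivity)⟩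
  set E : ι → Ω → ℝ := fun i ω => Real.exp (2 * t * X i ω) + Real.exp (-(2 * t * X i ω))
  have hE (i : ι) : Integrable (E i) μ :=
    ((hX i).integrable_exp_mul _).add (by simpa using (hX i).integrable_exp_mul (-(2 * t)))
  have hEmean (i : ι) : ∫ ω, E i ω ∂μ ≤ 2 * N := by
    refine (integral_exp_add_exp_neg_le (hX i) (2 * t)).trans_eq ?_
    rw [show c * (2 * t) ^ 2 / 2 = ℓ by rw [mul_pow, ht]; field_simp, Real.exp_log hN]
  have hexp : Real.exp (-(2 * ℓ)) = (N ^ 2)⁻¹ := by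
    rw [Real.exp_neg, mul_comm, Real.exp_mul, Real.exp_log hN, Real.rpow_two]
  have hsum : Integrable (fun ω => (∑ i, E i ω) * (N ^ 2)⁻¹) μ :=
    (integrable_finsetSum _ fun i _ => hE i).mul_const _
  refine ⟨fun ω => 2 / t ^ 2 * (ℓ ^ 2 + (∑ i, E i ω) * (N ^ 2)⁻¹),
    ((integrable_const _).add hsum).const_mul _, fun i ω => ?_, ?_⟩
  · exact hexp ▸ sq_le_two_div_mul_add_sum_exp (X · ω) ℓ ht0 i
  · rw [integral_const_mul, integral_add (integrable_const _) hsum, integral_mul_const,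
      integral_finsetSum _ fun i _ => hE i, integral_const, probReal_univ, one_smul]
    calc _ ≤ 2 / t ^ 2 * (ℓ ^ 2 + (∑ _i : ι, 2 * N) * (N ^ 2)⁻¹) := by
          gcongr with i
          exact hEmean i
      _ = c * (4 * ℓ + 8 / ℓ) := by
          rw [ht, Finset.sum_const, Finset.card_univ, nsmul_eq_mul, ← hNdef]
          field_simp
          ring

end MaximalInequality

section SubgaussianNoise

/-- The law `μ` of a random matrix is sub-Gaussian noise with variance proxy `c`: every linear
functional is sub-Gaussian, with proxy `c` times the squared norm of its coefficients. I.i.d.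
`N(0, σ²)` entries are the case `c = σ²`. -/
def IsSubgaussianNoise {n1 n2 : ℕ} (μ : Measure (Fin n1 → Fin n2 → ℝ)) (c : NNReal) : Prop :=
  ∀ a : Fin n1 → Fin n2 → ℝ, HasSubgaussianMGF (fun ε => ∑ i, ∑ j, a i j * ε i j)
    (c * ∑ i, ∑ j, ‖a i j‖₊ ^ 2) μ

theorem hasSubgaussianMGF_id_gaussianReal (v : NNReal) :
    HasSubgaussianMGF id v (gaussianReal 0 v) where
  integrable_exp_mul := integrable_exp_mul_gaussianReal
  mgf_le t := by simp [mgf_id_gaussianReal]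

theorem hasSubgaussianMGF_sum_pi {ι : Type*} [Fintype ι] {Ω : ι → Type*}
    [∀ i, MeasurableSpace (Ω i)] {μ : ∀ i, Measure (Ω i)} [∀ i, IsProbabilityMeasure (μ i)]
    {X : ∀ i, Ω i → ℝ} {c : ι → NNReal} (hX : ∀ i, HasSubgaussianMGF (X i) (c i) (μ i)) :
    HasSubgaussianMGF (fun ω => ∑ i, X i (ω i)) (∑ i, c i) (Measure.pi μ) :=
  HasSubgaussianMGF.sum_of_iIndepFun (iIndepFun_pi fun i => (hX i).aemeasurable) fun i _ =>
    HasSubgaussianMGF.of_map (measurable_pi_apply i).aemeasurable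
      ((measurePreserving_eval μ i).map_eq.symm ▸ hX i)

instance isProbabilityMeasure_noiseMeasure (n1 n2 : ℕ) (σ : ℝ) :
    IsProbabilityMeasure (noiseMeasure n1 n2 σ) :=
  have (v : NNReal) : IsProbabilityMeasure
      (Measure.pi fun _ : Fin n1 => Measure.pi fun _ : Fin n2 => gaussianReal 0 v) := inferInstance
  this _

theorem isSubgaussianNoise_noiseMeasure (n1 n2 : ℕ) (σ : ℝ) :
    IsSubgaussianNoise (noiseMeasure n1 n2 σ) (NNReal.mk (σ ^ 2) (sq_nonneg σ)) := by
  intro a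
  have entry (i : Fin n1) (j : Fin n2) :=
    (hasSubgaussianMGF_id_gaussianReal (NNReal.mk (σ ^ 2) (sq_nonneg σ))).const_mul (a i j)
  have hproxy : NNReal.mk (σ ^ 2) (sq_nonneg σ) * ∑ i, ∑ j, ‖a i j‖₊ ^ 2 =
      ∑ i, ∑ j, NNReal.mk (a i j ^ 2) (sq_nonneg _) * NNReal.mk (σ ^ 2) (sq_nonneg σ) := by
    ext
    push_cast
    simp [Finset.mul_sum, mul_comm]
  rw [hproxy]
  exact hasSubgaussianMGF_sum_pi fun i => hasSubgaussianMGF_sum_pi (entry i)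

variable {n1 n2 : ℕ} {μ : Measure (Fin n1 → Fin n2 → ℝ)} {c : NNReal}

/-- The sum of `ε` over the rectangle with corners `R.1` and `R.2`, divided by the square root of
the area. For an empty rectangle the value is `0`. -/
def normalizedRectSum (R : (Fin n1 × Fin n2) × (Fin n1 × Fin n2)) (ε : Fin n1 → Fin n2 → ℝ) : ℝ :=
  (√(Finset.Icc R.1 R.2).card)⁻¹ * ∑ x ∈ Finset.Icc R.1 R.2, ε x.1 x.2

theorem IsSubgaussianNoise.hasSubgaussianMGF_normalizedRectSum (hμ : IsSubgaussianNoise μ c)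
    (R : (Fin n1 × Fin n2) × (Fin n1 × Fin n2)) :
    HasSubgaussianMGF (normalizedRectSum R) c μ := by
  set A := Finset.Icc R.1 R.2
  set a : Fin n1 → Fin n2 → ℝ := fun i j => if (i, j) ∈ A then (√A.card)⁻¹ else 0
  have hsum : (fun ε => ∑ i, ∑ j, a i j * ε i j) = normalizedRectSum R := by
    ext ε
    rw [← Fintype.sum_prod_type' fun i j => a i j * ε i j]
    simp only [a, Prod.mk.eta, ite_mul, zero_mul, Finset.sum_ite_mem, Finset.univ_inter,
      normalizedRectSum, Finset.mul_sum, A]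
  have hnorm : ∑ i, ∑ j, ‖a i j‖₊ ^ 2 ≤ 1 := by
    rw [← Fintype.sum_prod_type' fun i j => ‖a i j‖₊ ^ 2, ← NNReal.coe_le_coe]
    push_cast
    simp only [a, Prod.mk.eta, Real.norm_eq_abs, sq_abs, ite_pow, inv_pow,
      Real.sq_sqrt (Nat.cast_nonneg _), zero_pow two_ne_zero, Finset.sum_ite_mem,
      Finset.univ_inter, Finset.sum_const, nsmul_eq_mul]
    exact mul_inv_le_one
  exact hsum ▸ hasSubgaussianMGF_of_le (hμ a) (mul_le_of_le_one_right' hnorm)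

theorem exists_eq_Icc_of_ordConnected {α : Type*} [LinearOrder α] [LocallyFiniteOrder α]
    {s : Finset α} (hs : (s : Set α).OrdConnected) (hne : s.Nonempty) :
    ∃ a b, s = Finset.Icc a b := by
  refine ⟨s.min' hne, s.max' hne, Finset.Subset.antisymm (fun x hx => ?_) fun x hx => ?_⟩
  · exact Finset.mem_Icc.2 ⟨s.min'_le x hx, s.le_max' x hx⟩
  · exact hs.out (s.min'_mem hne) (s.max'_mem hne) (Finset.mem_Icc.1 hx)

theorem isRectSumBounded_of_normalizedRectSum_sq_le {ε : Fin n1 → Fin n2 → ℝ} {Y : ℝ}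
    (h : ∀ R, normalizedRectSum R ε ^ 2 ≤ Y) : IsRectSumBounded ε √Y := by
  intro s t hs ht
  rcases s.eq_empty_or_nonempty with rfl | hs0
  · simp
  rcases t.eq_empty_or_nonempty with rfl | ht0
  · simp
  obtain ⟨a, b, rfl⟩ := exists_eq_Icc_of_ordConnected hs hs0
  obtain ⟨a', b', rfl⟩ := exists_eq_Icc_of_ordConnected ht ht0
  have key := Real.abs_le_sqrt (h ((a, a'), (b, b')))
  have harea : 0 < √((Finset.Icc a b).card * (Finset.Icc a' b').card : ℝ) := by
    have := hs0.card_pos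
    have := ht0.card_pos
    positivity
  rwa [normalizedRectSum, Finset.Icc_prod_def, Finset.card_product, Finset.sum_product,
    Nat.cast_mul, abs_mul, abs_of_pos (inv_pos.2 harea), inv_mul_le_iff₀ harea, mul_comm] at key

end SubgaussianNoise

section ProjectionBound

theorem natLog_two_add_one_le {n : ℕ} (hn : 1 < n) :
    (Nat.log 2 n + 1 : ℝ) ≤ 3 * Real.log n := by
  have hpow : (Nat.log 2 n : ℝ) * Real.log 2 ≤ Real.log n := by
    rw [← Real.log_pow]
    exact Real.log_le_log (by positivity)
      (mod_cast Nat.pow_log_le_self 2 (zero_lt_one.trans hn).ne')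
  have hone : (1 : ℝ) ≤ Nat.log 2 n := by
    exact_mod_cast Nat.log_pos one_lt_two hn
  nlinarith [Real.log_two_gt_d9]

variable {n1 n2 : ℕ} {μ : Measure (Fin n1 → Fin n2 → ℝ)} {c : NNReal}

theorem IsSubgaussianNoise.exists_isRectSumBounded_sqrt [IsProbabilityMeasure μ]
    (hμ : IsSubgaussianNoise μ c) (hc : 0 < c) (hn : 1 < n1 * n2) :
    ∃ Y : (Fin n1 → Fin n2 → ℝ) → ℝ, Integrable Y μ ∧ (∀ ε, 0 ≤ Y ε) ∧
      (∀ ε, IsRectSumBounded ε √(Y ε)) ∧ ∫ ε, Y ε ∂μ ≤ 17 * c * Real.log (n1 * n2) := by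
  have hcard : Fintype.card ((Fin n1 × Fin n2) × (Fin n1 × Fin n2)) = (n1 * n2) ^ 2 := by
    simp [sq]
  obtain ⟨Y, hYint, hY, hYmean⟩ := exists_integrable_forall_sq_le hc
    hμ.hasSubgaussianMGF_normalizedRectSum (hcard ▸ Nat.one_lt_pow two_ne_zero hn)
  obtain ⟨R⟩ : Nonempty ((Fin n1 × Fin n2) × (Fin n1 × Fin n2)) :=
    Fintype.card_pos_iff.1 (hcard ▸ by positivity)
  refine ⟨Y, hYint, fun ε => (sq_nonneg _).trans (hY R ε),
    fun ε => isRectSumBounded_of_normalizedRectSum_sq_le fun R => hY R ε, hYmean.trans ?_⟩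
  have hlog : Real.log 2 ≤ Real.log (n1 * n2) :=
    Real.log_le_log two_pos (mod_cast hn)
  have hpos : 0 < Real.log (n1 * n2) := (Real.log_pos one_lt_two).trans_le hlog
  have hdiv : 8 / (2 * Real.log (n1 * n2)) ≤ 9 * Real.log (n1 * n2) := by
    rw [div_le_iff₀ (by positivity)]
    nlinarith [Real.log_two_gt_d9]
  rw [hcard]
  push_cast [Real.log_pow]
  calc (c : ℝ) * (4 * (2 * Real.log (n1 * n2)) + 8 / (2 * Real.log (n1 * n2)))
      ≤ c * (4 * (2 * Real.log (n1 * n2)) + 9 * Real.log (n1 * n2)) := by gcongr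
    _ = 17 * c * Real.log (n1 * n2) := by ring

theorem frobSq_projC_tangentCone_le_log {θ ε : Fin n1 → Fin n2 → ℝ}
    {P : Finset (Set (Fin n1 × Fin n2))} (hP : IsRectPartition P) (hθ : ConstOnPartition θ P)
    (hn : 1 < n1 * n2) {Y : ℝ} (hY : 0 ≤ Y) (hε : IsRectSumBounded ε √Y) :
    frobSq (projC (tangentCone θ) ε) ≤ P.card * (108 ^ 2 * Real.log (n1 * n2) ^ 6 * Y) := by
  obtain ⟨h1, h2⟩ : 0 < n1 ∧ 0 < n2 := by
    simpa [Nat.pos_iff_ne_zero] using (zero_lt_one.trans hn).ne'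
  have hL : n1 * n2 < 2 ^ (Nat.log 2 (n1 * n2) + 1) := Nat.lt_pow_succ_log_self one_lt_two _
  have hlog : ((Nat.log 2 (n1 * n2) + 1 : ℕ) : ℝ) ≤ 3 * Real.log (n1 * n2) := by
    exact_mod_cast natLog_two_add_one_le hn
  calc frobSq (projC (tangentCone θ) ε)
      ≤ P.card * (4 * (Nat.log 2 (n1 * n2) + 1 : ℕ) ^ 3 * √Y) ^ 2 :=
        frobSq_projC_tangentCone_le hP hθ hε (Real.sqrt_nonneg Y)
          ((Nat.le_mul_of_pos_right n1 h2).trans_lt hL) ((Nat.le_mul_of_pos_left n2 h1).trans_lt hL)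
    _ ≤ P.card * (4 * (3 * Real.log (n1 * n2)) ^ 3 * √Y) ^ 2 := by gcongr
    _ = P.card * (108 ^ 2 * Real.log (n1 * n2) ^ 6 * Y) := by
        rw [mul_pow _ (√Y), Real.sq_sqrt hY]
        ring

end ProjectionBound

theorem gaussian_projection_tangent_cone_bound_general :
    ∃ C : ℝ, 0 < C ∧
      ∀ n1 n2 : ℕ, 1 < n1 * n2 → ∀ c : NNReal, 0 < c →
        ∀ (μ : Measure (Fin n1 → Fin n2 → ℝ)) [IsProbabilityMeasure μ], IsSubgaussianNoise μ c →
          ∀ (θ : Fin n1 → Fin n2 → ℝ) (P : Finset (Set (Fin n1 × Fin n2))),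
            IsRectPartition P → ConstOnPartition θ P →
              ∫ ε, frobSq (projC (tangentCone θ) ε) ∂μ ≤
                C * P.card * c * Real.log (n1 * n2) ^ 7 := by
  refine ⟨108 ^ 2 * 17, by norm_num, fun n1 n2 hn c hc μ _ hμ θ P hP hθ => ?_⟩
  obtain ⟨Y, hYint, hY0, hY, hYmean⟩ := hμ.exists_isRectSumBounded_sqrt hc hn
  calc ∫ ε, frobSq (projC (tangentCone θ) ε) ∂μ
      ≤ ∫ ε, P.card * (108 ^ 2 * Real.log (n1 * n2) ^ 6 * Y ε) ∂μ :=
        integral_mono_of_nonneg (.of_forall fun _ => frobSq_nonneg _)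
          ((hYint.const_mul _).const_mul _)
          (.of_forall fun ε => frobSq_projC_tangentCone_le_log hP hθ hn (hY0 ε) (hY ε))
    _ ≤ P.card * (108 ^ 2 * Real.log (n1 * n2) ^ 6 * (17 * c * Real.log (n1 * n2))) := by
        rw [integral_const_mul, integral_const_mul]
        gcongr
    _ = 108 ^ 2 * 17 * P.card * c * Real.log (n1 * n2) ^ 7 := by ring

/-- **Inequality (fofo.1) (projection of Gaussian noise onto tangent cones).** There
is a universal constant `C > 0` such that for all `n1, n2 > 1`, `σ > 0`, every
isotonic `θ` and every rectangular partition `P` (with `k = |P|` rectangles) on which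
`θ` is constant, `E‖Π(ε, T_M(θ))‖² ≤ C k σ² (log n)⁸` with `n = n1 n2`, where `ε` has
i.i.d. `N(0,σ²)` entries. -/
theorem gaussian_projection_tangent_cone_bound :
    ∃ C : ℝ, 0 < C ∧
      ∀ (n1 n2 : ℕ), 1 < n1 → 1 < n2 → ∀ σ : ℝ, 0 < σ →
        ∀ θ : Fin n1 → Fin n2 → ℝ, Isotonic θ →
          ∀ P : Finset (Set (Fin n1 × Fin n2)), IsRectPartition P →
            ConstOnPartition θ P →
            (∫ ε, frobSq (projC (tangentCone θ) ε) ∂noiseMeasure n1 n2 σ) ≤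
              C * P.card * σ ^ 2 * Real.log (n1 * n2) ^ 8 := by
  obtain ⟨C, hC, h⟩ := gaussian_projection_tangent_cone_bound_general
  refine ⟨C, hC, fun n1 n2 h1 h2 σ hσ θ _ P hP hθ => ?_⟩
  have hn : 2 ^ 2 ≤ n1 * n2 := (sq 2).trans_le (Nat.mul_le_mul h1 h2)
  have hlog : 1 ≤ Real.log (n1 * n2) := by
    have hle : Real.log (2 ^ 2) ≤ Real.log (n1 * n2) :=
      Real.log_le_log (by positivity) (mod_cast hn)
    rw [Real.log_pow] at hle
    push_cast at hle
    linarith [Real.log_two_gt_d9]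
  refine (h n1 n2 (by lia) (NNReal.mk (σ ^ 2) (sq_nonneg σ)) (sq_pos_of_pos hσ) _
    (isSubgaussianNoise_noiseMeasure n1 n2 σ) θ P hP hθ).trans ?_
  rw [NNReal.coe_mk]
  gcongr
  norm_num
end
end

section
/- Fix θ* ∈ M with D := (θ*_{n1 n2} − θ*_{11})² > 0 and a real number c ≥ 1. Define the matrix θ by θ_{ij} = θ*_{11} + (sqrt(D)/c) · floor( c (θ*_{ij} − θ*_{11}) / sqrt(D) ). Then (i) θ ∈ M; (ii) θ*_{ij} − sqrt(D)/c ≤ θ_{ij} ≤ θ*_{ij} for all i, j, so that ||θ − θ*||² ≤ n·D/c²; and (iii) the number of distinct values c(θ) of the entries of θ is at most c + 1. -/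
open MeasureTheory ProbabilityTheory

noncomputable section

/-- `D(θ) = (θ_{n1 n2} − θ_{11})²`, the squared range of an isotonic matrix. -/
def Dmat {n1 n2 : ℕ} (h1 : 0 < n1) (h2 : 0 < n2) (θ : Fin n1 → Fin n2 → ℝ) : ℝ :=
  (θ ⟨n1 - 1, Nat.sub_lt h1 one_pos⟩ ⟨n2 - 1, Nat.sub_lt h2 one_pos⟩ - θ ⟨0, h1⟩ ⟨0, h2⟩) ^ 2

/-- Rounding of `x` to the grid `a + δ ℤ`, downwards for `0 < δ`. It is the entrywise operation of
the discretization, with base point `a = θ*₁₁` and mesh `δ = √D / c`. -/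
def gridFloor {K : Type*} [Field K] [LinearOrder K] [FloorRing K] (a δ x : K) : K :=
  a + δ * ⌊(x - a) / δ⌋

section GridFloor

variable {K : Type*} [Field K] [LinearOrder K] [FloorRing K] {a b δ x : K}

lemma gridFloor_div (a r c x : K) : gridFloor a (r / c) x = a + r / c * ⌊c * (x - a) / r⌋ := by
  rw [gridFloor, div_div_eq_mul_div, mul_comm (x - a) c]

lemma sub_gridFloor (hδ : δ ≠ 0) : x - gridFloor a δ x = δ * Int.fract ((x - a) / δ) := by
  rw [gridFloor, Int.fract, mul_sub, mul_div_cancel₀ _ hδ, sub_sub]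

variable [IsStrictOrderedRing K]

lemma gridFloor_mono (hδ : 0 ≤ δ) : Monotone (gridFloor a δ) := by
  intro x y hxy
  unfold gridFloor
  gcongr

lemma gridFloor_le (hδ : 0 < δ) : gridFloor a δ x ≤ x := by
  rw [← sub_nonneg, sub_gridFloor hδ.ne']
  exact mul_nonneg hδ.le (Int.fract_nonneg _)

lemma sub_lt_gridFloor (hδ : 0 < δ) : x - δ < gridFloor a δ x := by
  rw [sub_lt_comm, sub_gridFloor hδ.ne']
  exact mul_lt_of_lt_one_right hδ (Int.fract_lt_one _)

lemma gridFloor_sub_sq_le (hδ : δ ≠ 0) : (gridFloor a δ x - x) ^ 2 ≤ δ ^ 2 := by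
  rw [sub_sq_comm, sub_gridFloor hδ, mul_pow]
  exact mul_le_of_le_one_right (sq_nonneg δ)
    (pow_le_one₀ (Int.fract_nonneg _) (Int.fract_lt_one _).le)

lemma gridFloor_eq_add_mul_natFloor (hδ : 0 ≤ δ) (hx : a ≤ x) :
    gridFloor a δ x = a + δ * ⌊(x - a) / δ⌋₊ := by
  rw [gridFloor, natCast_floor_eq_intCast_floor (div_nonneg (sub_nonneg.2 hx) hδ)]

lemma card_image_gridFloor_le (hδ : 0 ≤ δ) {s : Finset K} (hs : ∀ x ∈ s, x ∈ Set.Icc a b) :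
    (s.image (gridFloor a δ)).card ≤ ⌊(b - a) / δ⌋₊ + 1 := by
  have hsub : s.image (gridFloor a δ) ⊆
      (Finset.range (⌊(b - a) / δ⌋₊ + 1)).image fun m : ℕ => a + δ * m := by
    refine Finset.image_subset_iff.2 fun x hx => Finset.mem_image.2 ⟨⌊(x - a) / δ⌋₊, ?_, ?_⟩
    · have hxb : x ≤ b := (hs x hx).2
      exact Finset.mem_range_succ_iff.2 (by gcongr)
    · exact (gridFloor_eq_add_mul_natFloor hδ (hs x hx).1).symm
  calc (s.image (gridFloor a δ)).card
      ≤ (Finset.range (⌊(b - a) / δ⌋₊ + 1)).card :=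
        (Finset.card_le_card hsub).trans Finset.card_image_le
    _ = ⌊(b - a) / δ⌋₊ + 1 := Finset.card_range _

theorem isotonic_discretization_general {ι : Type*} [Fintype ι] [Preorder ι] {f θ : ι → K}
    {r c : K} (hf : Monotone f) (hfr : ∀ i, f i ∈ Set.Icc a (a + r)) (hr : 0 < r) (hc : 0 < c)
    (hθ : ∀ i, θ i = a + r / c * ⌊c * (f i - a) / r⌋) :
    Monotone θ ∧
      (∀ i, f i - r / c ≤ θ i ∧ θ i ≤ f i) ∧
      ∑ i, (θ i - f i) ^ 2 ≤ Fintype.card ι * r ^ 2 / c ^ 2 ∧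
      ((Finset.univ.image θ).card : K) ≤ c + 1 := by
  have hδ : 0 < r / c := div_pos hr hc
  obtain rfl : θ = gridFloor a (r / c) ∘ f :=
    funext fun i => (hθ i).trans (gridFloor_div a r c (f i)).symm
  refine ⟨(gridFloor_mono hδ.le).comp hf,
    fun i => ⟨(sub_lt_gridFloor hδ).le, gridFloor_le hδ⟩, ?_, ?_⟩
  · calc ∑ i, (gridFloor a (r / c) (f i) - f i) ^ 2
        ≤ Fintype.card ι • (r / c) ^ 2 :=
          Finset.sum_le_card_nsmul _ _ _ fun _ _ => gridFloor_sub_sq_le hδ.ne'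
      _ = Fintype.card ι * r ^ 2 / c ^ 2 := by rw [nsmul_eq_mul, div_pow, mul_div_assoc]
  · have hcells : (a + r - a) / (r / c) = c := by
      rw [add_sub_cancel_left, div_div_cancel₀ hr.ne']
    have hcard := card_image_gridFloor_le (s := Finset.univ.image f) hδ.le (by simpa using hfr)
    rw [hcells, Finset.image_image] at hcard
    calc ((Finset.univ.image (gridFloor a (r / c) ∘ f)).card : K)
        ≤ ⌊c⌋₊ + 1 := mod_cast hcard
      _ ≤ c + 1 := by gcongr; exact Nat.floor_le hc.le

end GridFloor

section IsotonicMatrix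

variable {n1 n2 : ℕ} {θ : Fin n1 → Fin n2 → ℝ}

lemma isotonic_iff_monotone_uncurry : Isotonic θ ↔ Monotone (Function.uncurry θ) :=
  ⟨fun h _ _ hpq => h hpq.1 hpq.2, fun h _ _ _ _ hik hjl => h (Prod.mk_le_mk.2 ⟨hik, hjl⟩)⟩

lemma frobSq_eq_sum_uncurry (θ : Fin n1 → Fin n2 → ℝ) :
    frobSq θ = ∑ p, Function.uncurry θ p ^ 2 := by
  simp only [frobSq, Function.uncurry, Fintype.sum_prod_type]

lemma Isotonic.mem_Icc_add_sqrt_Dmat (hθ : Isotonic θ) (h1 : 0 < n1) (h2 : 0 < n2)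
    (i : Fin n1) (j : Fin n2) :
    θ i j ∈ Set.Icc (θ ⟨0, h1⟩ ⟨0, h2⟩) (θ ⟨0, h1⟩ ⟨0, h2⟩ + √(Dmat h1 h2 θ)) := by
  refine ⟨hθ (Nat.zero_le i) (Nat.zero_le j), ?_⟩
  rw [← sub_le_iff_le_add', Dmat, Real.sqrt_sq_eq_abs]
  refine le_trans (sub_le_sub_right ?_ _) (le_abs_self _)
  exact hθ (Nat.le_sub_one_of_lt i.isLt) (Nat.le_sub_one_of_lt j.isLt)

end IsotonicMatrix

/-- **Discretization construction (Section 2.2).** Let `θ*` be isotonic with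
`D = (θ*_{n1 n2} − θ*_{11})² > 0` and let `c ≥ 1`. Define
`θ_{ij} = θ*_{11} + (sqrt D / c) ⌊c (θ*_{ij} − θ*_{11}) / sqrt D⌋`. Then (i) `θ` is
isotonic; (ii) `θ*_{ij} − sqrt D / c ≤ θ_{ij} ≤ θ*_{ij}` for all `i, j`, and hence
`‖θ − θ*‖² ≤ n D / c²`; (iii) `θ` takes at most `c + 1` distinct values. -/
theorem isotonic_discretization
    {n1 n2 : ℕ} (h1 : 0 < n1) (h2 : 0 < n2)
    (θstar : Fin n1 → Fin n2 → ℝ) (hθstar : Isotonic θstar)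
    (D : ℝ) (hDdef : D = Dmat h1 h2 θstar) (hD : 0 < D)
    (c : ℝ) (hc : 1 ≤ c)
    (θ : Fin n1 → Fin n2 → ℝ)
    (hθdef : ∀ i j, θ i j =
      θstar ⟨0, h1⟩ ⟨0, h2⟩ +
        Real.sqrt D / c *
          (⌊c * (θstar i j - θstar ⟨0, h1⟩ ⟨0, h2⟩) / Real.sqrt D⌋ : ℤ)) :
    Isotonic θ ∧
      (∀ i j, θstar i j - Real.sqrt D / c ≤ θ i j ∧ θ i j ≤ θstar i j) ∧
      frobSq (θ - θstar) ≤ (n1 * n2 : ℝ) * D / c ^ 2 ∧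
      ((Finset.image (fun p : Fin n1 × Fin n2 => θ p.1 p.2) Finset.univ).card : ℝ) ≤
        c + 1 := by
  subst hDdef
  obtain ⟨hmono, hbound, hsum, hcard⟩ := isotonic_discretization_general (θ := Function.uncurry θ)
    (isotonic_iff_monotone_uncurry.1 hθstar)
    (fun p => hθstar.mem_Icc_add_sqrt_Dmat h1 h2 p.1 p.2)
    (Real.sqrt_pos.2 hD) (zero_lt_one.trans_le hc) (fun p => hθdef p.1 p.2)
  refine ⟨isotonic_iff_monotone_uncurry.2 hmono, fun i j => hbound (i, j), ?_, hcard⟩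
  rw [Real.sq_sqrt hD.le, Fintype.card_prod, Fintype.card_fin, Fintype.card_fin,
    Nat.cast_mul] at hsum
  exact (frobSq_eq_sum_uncurry (θ - θstar)).trans_le hsum
end
end

section
/- Let k be a positive integer and n1 = n2 = 2^k, n = n1·n2. Define θ* ∈ ℝ^{n1×n2} by θ*_{ij} = −(2^{−i} + 2^{−j}) and θ ∈ ℝ^{n1×n2} by θ_{ij} = −(2^{−min(i,k)} + 2^{−min(j,k)}). Then θ* ∈ M, θ ∈ M, k(θ) ≤ (k+1)², and (1/n)||θ − θ*||² ≤ max_{i,j} (θ_{ij} − θ*_{ij})² ≤ 4/n. -/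
open MeasureTheory ProbabilityTheory

noncomputable section

/-!
A matrix whose `(i, j)` entry depends only on `f i` and `g j`, with `f` and `g` monotone, is
constant on the products of a fibre of `f` and a fibre of `g`. Fibres of monotone maps are
intervals, so these products form a rectangular partition, and `k(θ)` is at most the number of
values of `f` times the number of values of `g`. Truncating the exponents at `k` leaves only the
values `1, …, k`, and it changes each of the two powers of `2` by at most `2 ^ (-k)`, hence each
entry by at most `2 * 2 ^ (-k) = 2 / √n`.
-/

lemma isotonic_neg_add_of_antitone {n1 n2 : ℕ} {u : Fin n1 → ℝ} {v : Fin n2 → ℝ}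
    (hu : Antitone u) (hv : Antitone v) : Isotonic fun i j => -(u i + v j) :=
  fun _ _ _ _ hi hj => neg_le_neg (add_le_add (hu hi) (hv hj))

lemma isotonic_neg_zpow_neg_add {n1 n2 : ℕ} {r : ℝ} (hr : 1 ≤ r) {a : Fin n1 → ℤ}
    {b : Fin n2 → ℤ} (ha : Monotone a) (hb : Monotone b) :
    Isotonic fun i j => -(r ^ (-a i) + r ^ (-b j)) :=
  isotonic_neg_add_of_antitone ((zpow_right_mono₀ hr).comp_antitone ha.neg)
    ((zpow_right_mono₀ hr).comp_antitone hb.neg)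

lemma exists_eq_Icc_of_ordConnected_of_finite {ι : Type*} [LinearOrder ι] {s : Set ι}
    (hs : s.OrdConnected) (hfin : s.Finite) (hne : s.Nonempty) :
    ∃ a b, a ≤ b ∧ s = Set.Icc a b := by
  obtain ⟨a, ha, ha_le⟩ := Set.exists_min_image s id hfin hne
  obtain ⟨b, hb, hle_b⟩ := Set.exists_max_image s id hfin hne
  exact ⟨a, b, ha_le b hb, Set.Subset.antisymm (fun x hx => ⟨ha_le x hx, hle_b x hx⟩)
    (hs.out ha hb)⟩

lemma exists_preimage_singleton_eq_Icc {ι α : Type*} [LinearOrder ι] [Finite ι] [PartialOrder α]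
    {f : ι → α} (hf : Monotone f) (i : ι) : ∃ a b, a ≤ b ∧ f ⁻¹' {f i} = Set.Icc a b :=
  exists_eq_Icc_of_ordConnected_of_finite (Set.ordConnected_singleton.preimage_mono hf)
    (Set.toFinite _) ⟨i, rfl⟩

lemma isRect_preimage_prodMap_singleton {n1 n2 : ℕ} {α β : Type*} [PartialOrder α]
    [PartialOrder β] {f : Fin n1 → α} {g : Fin n2 → β} (hf : Monotone f) (hg : Monotone g)
    (p : Fin n1 × Fin n2) : IsRect (Prod.map f g ⁻¹' {Prod.map f g p}) := by
  obtain ⟨a, b, hab, hf_fiber⟩ := exists_preimage_singleton_eq_Icc hf p.1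
  obtain ⟨c, d, hcd, hg_fiber⟩ := exists_preimage_singleton_eq_Icc hg p.2
  refine ⟨a, b, c, d, hab, hcd, ?_⟩
  rw [Prod.map_apply', ← Set.singleton_prod_singleton, Set.preimage_prod_map_prod, hf_fiber,
    hg_fiber]
  ext q
  simp only [Set.mem_prod, Set.mem_Icc, Set.mem_ofPred_eq, and_assoc]

lemma kRect_le_card {n1 n2 : ℕ} {θ : Fin n1 → Fin n2 → ℝ} {P : Finset (Set (Fin n1 × Fin n2))}
    (hP : IsRectPartition P) (hθ : ConstOnPartition θ P) : kRect θ ≤ P.card :=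
  Nat.sInf_le ⟨P, hP, hθ, rfl⟩

section FiberPartition

variable {n1 n2 : ℕ} {α β : Type*} [DecidableEq α] [DecidableEq β]

open Classical in
/-- The partition of the index set into the nonempty products of a fibre of `f` and a fibre of
`g`, encoded as the fibres of `Prod.map f g`. For monotone `f` and `g` it is a rectangular
partition. -/
def fiberPartition (f : Fin n1 → α) (g : Fin n2 → β) : Finset (Set (Fin n1 × Fin n2)) :=
  (Finset.univ.image f ×ˢ Finset.univ.image g).image fun c => Prod.map f g ⁻¹' {c}

lemma mem_fiberPartition {f : Fin n1 → α} {g : Fin n2 → β} {A : Set (Fin n1 × Fin n2)} :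
    A ∈ fiberPartition f g ↔ ∃ p : Fin n1 × Fin n2, Prod.map f g ⁻¹' {Prod.map f g p} = A := by
  simp [fiberPartition, ← Finset.prodMap_image_product]

lemma card_fiberPartition_le (f : Fin n1 → α) (g : Fin n2 → β) :
    (fiberPartition f g).card ≤ (Finset.univ.image f).card * (Finset.univ.image g).card :=
  Finset.card_image_le.trans_eq (Finset.card_product _ _)

lemma constOnPartition_fiberPartition (f : Fin n1 → α) (g : Fin n2 → β) (φ : α → β → ℝ) :
    ConstOnPartition (fun i j => φ (f i) (g j)) (fiberPartition f g) := by
  intro A hA q hq r hr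
  obtain ⟨p, rfl⟩ := mem_fiberPartition.1 hA
  exact congrArg (Function.uncurry φ) (hq.trans hr.symm)

variable [PartialOrder α] [PartialOrder β]

lemma isRectPartition_fiberPartition {f : Fin n1 → α} {g : Fin n2 → β} (hf : Monotone f)
    (hg : Monotone g) : IsRectPartition (fiberPartition f g) := by
  refine ⟨fun A hA => ?_, fun A hA B hB hAB => ?_,
    fun p => ⟨_, mem_fiberPartition.2 ⟨p, rfl⟩, rfl⟩⟩
  · obtain ⟨p, rfl⟩ := mem_fiberPartition.1 hA
    exact isRect_preimage_prodMap_singleton hf hg p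
  · obtain ⟨p, rfl⟩ := mem_fiberPartition.1 hA
    obtain ⟨q, rfl⟩ := mem_fiberPartition.1 hB
    refine Disjoint.preimage _ (Set.disjoint_singleton.2 fun hpq => hAB ?_)
    rw [hpq]

lemma kRect_le_card_image_mul_card_image {f : Fin n1 → α} {g : Fin n2 → β} (hf : Monotone f)
    (hg : Monotone g) (φ : α → β → ℝ) :
    kRect (fun i j => φ (f i) (g j)) ≤
      (Finset.univ.image f).card * (Finset.univ.image g).card :=
  (kRect_le_card (isRectPartition_fiberPartition hf hg)
    (constOnPartition_fiberPartition f g φ)).trans (card_fiberPartition_le f g)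

end FiberPartition

lemma card_image_min_succ_le (n : ℕ) {k : ℕ} (hk : 0 < k) :
    (Finset.univ.image fun i : Fin n => min ((i : ℤ) + 1) k).card ≤ k := by
  have hsub : (Finset.univ.image fun i : Fin n => min ((i : ℤ) + 1) k) ⊆ Finset.Icc 1 (k : ℤ) :=
    Finset.image_subset_iff.2 fun i _ => Finset.mem_Icc.2 (by omega)
  simpa using Finset.card_le_card hsub

lemma frobSq_div_le_iSup {n1 n2 : ℕ} (θ : Fin n1 → Fin n2 → ℝ) :
    frobSq θ / ((n1 * n2 : ℕ) : ℝ) ≤ ⨆ p : Fin n1 × Fin n2, θ p.1 p.2 ^ 2 := by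
  refine div_le_of_le_mul₀ (Nat.cast_nonneg _) (Real.iSup_nonneg fun p => sq_nonneg _) ?_
  calc frobSq θ = ∑ p : Fin n1 × Fin n2, θ p.1 p.2 ^ 2 :=
        (Fintype.sum_prod_type' fun i j => θ i j ^ 2).symm
    _ ≤ ∑ _p : Fin n1 × Fin n2, ⨆ p : Fin n1 × Fin n2, θ p.1 p.2 ^ 2 :=
        Finset.sum_le_sum fun p _ =>
          le_ciSup (f := fun p : Fin n1 × Fin n2 => θ p.1 p.2 ^ 2) (Set.finite_range _).bddAbove p
    _ = (⨆ p : Fin n1 × Fin n2, θ p.1 p.2 ^ 2) * ((n1 * n2 : ℕ) : ℝ) := by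
        simp [mul_comm]

lemma zpow_neg_min_sub_mem_Icc {r : ℝ} (hr : 1 ≤ r) (m k : ℤ) :
    r ^ (-min m k) - r ^ (-m) ∈ Set.Icc 0 (r ^ (-k)) := by
  have hpos : ∀ l : ℤ, 0 < r ^ l := zpow_pos (zero_lt_one.trans_le hr)
  rcases le_total m k with hmk | hkm
  · simpa [min_eq_left hmk] using (hpos (-k)).le
  · have hle : r ^ (-m) ≤ r ^ (-k) := zpow_right_mono₀ hr (neg_le_neg hkm)
    rw [min_eq_right hkm]
    exact ⟨sub_nonneg.2 hle, sub_le_self _ (hpos (-m)).le⟩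

lemma sq_neg_zpow_neg_min_add_sub_le {r : ℝ} (hr : 1 ≤ r) (a b k : ℤ) :
    (-(r ^ (-min a k) + r ^ (-min b k)) - -(r ^ (-a) + r ^ (-b))) ^ 2 ≤ (2 * r ^ (-k)) ^ 2 := by
  obtain ⟨ha_nonneg, ha_le⟩ := zpow_neg_min_sub_mem_Icc hr a k
  obtain ⟨hb_nonneg, hb_le⟩ := zpow_neg_min_sub_mem_Icc hr b k
  exact sq_le_sq' (by linarith) (by linarith)

theorem isotonic_dyadic_example_general {n1 n2 k : ℕ} [NeZero n1] [NeZero n2] (hk : 0 < k)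
    {r : ℝ} (hr : 1 ≤ r) {θstar θ : Fin n1 → Fin n2 → ℝ}
    (hθstar : ∀ i j, θstar i j = -(r ^ (-((i.1 : ℤ) + 1)) + r ^ (-((j.1 : ℤ) + 1))))
    (hθ : ∀ i j, θ i j =
      -(r ^ (-(min ((i.1 : ℤ) + 1) (k : ℤ))) + r ^ (-(min ((j.1 : ℤ) + 1) (k : ℤ))))) :
    Isotonic θstar ∧ Isotonic θ ∧ kRect θ ≤ k ^ 2 ∧
      frobSq (θ - θstar) / ((n1 * n2 : ℕ) : ℝ) ≤
        (⨆ p : Fin n1 × Fin n2, (θ p.1 p.2 - θstar p.1 p.2) ^ 2) ∧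
      (⨆ p : Fin n1 × Fin n2, (θ p.1 p.2 - θstar p.1 p.2) ^ 2) ≤ 4 / (r ^ k * r ^ k) := by
  have hsucc (n : ℕ) : Monotone fun i : Fin n => (i : ℤ) + 1 := fun i j hij =>
    add_le_add_left (Int.ofNat_le.2 hij) 1
  have hmin (n : ℕ) : Monotone fun i : Fin n => min ((i : ℤ) + 1) (k : ℤ) :=
    (hsucc n).min monotone_const
  obtain rfl := funext₂ hθstar
  obtain rfl := funext₂ hθ
  refine ⟨isotonic_neg_zpow_neg_add hr (hsucc n1) (hsucc n2),
    isotonic_neg_zpow_neg_add hr (hmin n1) (hmin n2), ?_, frobSq_div_le_iSup _,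
    ciSup_le fun p => ?_⟩
  · rw [sq]
    exact (kRect_le_card_image_mul_card_image (hmin n1) (hmin n2)
      fun a b => -(r ^ (-a) + r ^ (-b))).trans
        (Nat.mul_le_mul (card_image_min_succ_le n1 hk) (card_image_min_succ_le n2 hk))
  · calc
      _ ≤ (2 * r ^ (-(k : ℤ))) ^ 2 := sq_neg_zpow_neg_min_add_sub_le hr _ _ _
      _ = 4 / (r ^ k * r ^ k) := by
        rw [zpow_neg, zpow_natCast, ← div_eq_mul_inv, div_pow, sq (r ^ k)]
        norm_num

/-- **Remark 3 (example of near-parametric adaptation).** Let `n1 = n2 = 2^k` and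
`n = n1 n2`. Define `θ*_{ij} = −(2^{−i} + 2^{−j})` and
`θ_{ij} = −(2^{−min(i,k)} + 2^{−min(j,k)})` (`1`-based indices, so the `0`-based
index `i` below corresponds to `i+1`). Then `θ*` and `θ` are isotonic,
`k(θ) ≤ (k+1)²`, and `(1/n)‖θ − θ*‖² ≤ max_{i,j}(θ_{ij} − θ*_{ij})² ≤ 4/n`. -/
theorem isotonic_dyadic_example
    (k : ℕ) (hk : 0 < k)
    (θstar θ : Fin (2 ^ k) → Fin (2 ^ k) → ℝ)
    (hθstar : ∀ i j, θstar i j =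
      -((2 : ℝ) ^ (-((i.1 : ℤ) + 1)) + (2 : ℝ) ^ (-((j.1 : ℤ) + 1))))
    (hθ : ∀ i j, θ i j =
      -((2 : ℝ) ^ (-(min ((i.1 : ℤ) + 1) (k : ℤ))) +
        (2 : ℝ) ^ (-(min ((j.1 : ℤ) + 1) (k : ℤ))))) :
    Isotonic θstar ∧ Isotonic θ ∧ kRect θ ≤ (k + 1) ^ 2 ∧
      frobSq (θ - θstar) / ((2 ^ k * 2 ^ k : ℕ) : ℝ) ≤
        (⨆ p : Fin (2 ^ k) × Fin (2 ^ k), (θ p.1 p.2 - θstar p.1 p.2) ^ 2) ∧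
      (⨆ p : Fin (2 ^ k) × Fin (2 ^ k), (θ p.1 p.2 - θstar p.1 p.2) ^ 2) ≤
        4 / ((2 ^ k * 2 ^ k : ℕ) : ℝ) := by
  obtain ⟨hstar, htrunc, hcard, hfrob, hsup⟩ :=
    isotonic_dyadic_example_general hk one_le_two hθstar hθ
  exact ⟨hstar, htrunc, hcard.trans (by gcongr; omega), hfrob, by exact_mod_cast hsup⟩
end
end

section
/- For every θ* ∈ M and every t ≥ 0, the expected supremum of the Gaussian process satisfies E[ sup over θ ∈ B(θ*, t) of ⟨ε, θ − θ*⟩ ] ≤ ( t + sqrt( n V(θ*) ) ) · E[ sup over θ ∈ B(0,1) of ⟨ε, θ⟩ ], where ε is a matrix with i.i.d. N(0,σ²) entries and ⟨A, B⟩ = Σ_{i,j} A_{ij} B_{ij}. -/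
open MeasureTheory ProbabilityTheory

noncomputable section

/-- The trace inner product `⟨a, b⟩ = Σ_{i,j} a_{ij} b_{ij}`. -/
def ip {n1 n2 : ℕ} (a b : Fin n1 → Fin n2 → ℝ) : ℝ := ∑ i, ∑ j, a i j * b i j

/-- The variance `V(θ) = (1/n) Σ_{i,j} (θ_{ij} − θ̄)²` of the entries of `θ`. -/
def matVar {n1 n2 : ℕ} (θ : Fin n1 → Fin n2 → ℝ) : ℝ :=
  (∑ i, ∑ j, (θ i j - (∑ i, ∑ j, θ i j) / (n1 * n2)) ^ 2) / (n1 * n2)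

/-! For centred noise the mean width of a set is translation invariant, monotone and positively
homogeneous. If the translation by `-c` maps the cone `K` into itself, it maps `K ∩ B(θ₀, t)` into
`K ∩ B(0, t + ‖θ₀ - c‖)`, which is a dilate of `K ∩ B(0, 1)`. For isotonic matrices `c` is the
constant matrix with entries `θ̄`, for which `‖θ* - c‖² = n V(θ*)`. -/

section MeanWidth

open Bornology Metric Set
open scoped NNReal Pointwise RealInnerProductSpace

variable {E : Type*} [NormedAddCommGroup E] [InnerProductSpace ℝ E] {S T : Set E}

/-- The support function `h_S(x) = sup_{θ ∈ S} ⟪x, θ⟫` of a set. As a real supremum it is `0` when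
`S` is empty or `⟪x, ·⟫` is unbounded above on `S`. -/
def supportFun (S : Set E) (x : E) : ℝ := sSup ((fun θ ↦ ⟪x, θ⟫) '' S)

lemma bddAbove_image_inner (hS : IsBounded S) (x : E) : BddAbove ((fun θ ↦ ⟪x, θ⟫) '' S) :=
  ((innerSL ℝ x).lipschitz.isBounded_image hS).bddAbove

lemma supportFun_mono (hST : S ⊆ T) (hS : S.Nonempty) (hT : IsBounded T) (x : E) :
    supportFun S x ≤ supportFun T x :=
  csSup_le_csSup (bddAbove_image_inner hT x) (hS.image _) (image_mono hST)

lemma supportFun_singleton (v x : E) : supportFun {v} x = ⟪x, v⟫ := by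
  rw [supportFun, image_singleton, csSup_singleton]

lemma supportFun_add (hS : S.Nonempty) (hS' : IsBounded S) (hT : T.Nonempty) (hT' : IsBounded T)
    (x : E) : supportFun (S + T) x = supportFun S x + supportFun T x := by
  have h : (fun θ ↦ ⟪x, θ⟫) '' (S + T) = (fun θ ↦ ⟪x, θ⟫) '' S + (fun θ ↦ ⟪x, θ⟫) '' T :=
    image_add (innerSL ℝ x)
  rw [supportFun, h, csSup_add (hS.image _) (bddAbove_image_inner hS' x)
    (hT.image _) (bddAbove_image_inner hT' x), supportFun, supportFun]

lemma supportFun_smul {r : ℝ} (hr : 0 ≤ r) (S : Set E) (x : E) :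
    supportFun (r • S) x = r * supportFun S x := by
  have h : (fun θ ↦ ⟪x, θ⟫) '' (r • S) = r • (fun θ ↦ ⟪x, θ⟫) '' S :=
    image_smul_comm _ _ _ fun θ ↦ inner_smul_right x θ r
  rw [supportFun, h, Real.sSup_smul_of_nonneg hr, smul_eq_mul, supportFun]

lemma supportFun_zero (S : Set E) : supportFun S 0 = 0 := by
  simp only [supportFun, inner_zero_left, sSup_image', Real.iSup_const_zero]

lemma lipschitzWith_supportFun {R : ℝ≥0} (hS : S.Nonempty) (hR : ∀ θ ∈ S, ‖θ‖ ≤ R) :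
    LipschitzWith R (supportFun S) := by
  refine LipschitzWith.of_le_add_mul R fun x y ↦ csSup_le (hS.image _) ?_
  rintro _ ⟨θ, hθ, rfl⟩
  have hbdd : IsBounded S := isBounded_iff_forall_norm_le.2 ⟨R, hR⟩
  calc ⟪x, θ⟫ = ⟪y, θ⟫ + ⟪x - y, θ⟫ := by rw [← inner_add_left, add_sub_cancel]
    _ ≤ supportFun S y + R * dist x y := by
      gcongr
      · exact le_csSup (bddAbove_image_inner hbdd y) (mem_image_of_mem _ hθ)
      · rw [dist_eq_norm, mul_comm]
        exact (real_inner_le_norm _ _).trans (by gcongr; exact hR θ hθ)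

variable {Ω : Type*} [MeasurableSpace Ω] {μ : Measure Ω} {X : Ω → E}

/-- The mean width `𝔼 h_S(X)` of a set with respect to a random vector `X`. -/
def meanWidth (μ : Measure Ω) (X : Ω → E) (S : Set E) : ℝ := ∫ ω, supportFun S (X ω) ∂μ

lemma integrable_supportFun_comp (hX : Integrable X μ) (hS : S.Nonempty) (hS' : IsBounded S) :
    Integrable (fun ω ↦ supportFun S (X ω)) μ := by
  obtain ⟨R, hR₀, hR⟩ := hS'.exists_pos_norm_le
  lift R to ℝ≥0 using hR₀.le
  rw [← memLp_one_iff_integrable] at hX ⊢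
  exact (lipschitzWith_supportFun hS hR).comp_memLp (supportFun_zero S) hX

lemma meanWidth_mono (hX : Integrable X μ) (hST : S ⊆ T) (hS : S.Nonempty) (hT : IsBounded T) :
    meanWidth μ X S ≤ meanWidth μ X T :=
  integral_mono (integrable_supportFun_comp hX hS (hT.subset hST))
    (integrable_supportFun_comp hX (hS.mono hST) hT) fun ω ↦ supportFun_mono hST hS hT (X ω)

lemma meanWidth_smul {r : ℝ} (hr : 0 ≤ r) (S : Set E) :
    meanWidth μ X (r • S) = r * meanWidth μ X S := by
  simp only [meanWidth, supportFun_smul hr, integral_const_mul]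

lemma meanWidth_add (hX : Integrable X μ) (hS : S.Nonempty) (hS' : IsBounded S) (hT : T.Nonempty)
    (hT' : IsBounded T) : meanWidth μ X (S + T) = meanWidth μ X S + meanWidth μ X T := by
  simp only [meanWidth, supportFun_add hS hS' hT hT']
  exact integral_add (integrable_supportFun_comp hX hS hS') (integrable_supportFun_comp hX hT hT')

lemma inter_closedBall_zero_subset_smul (K : PointedCone ℝ E) {r : ℝ} (hr : 0 ≤ r) :
    (K : Set E) ∩ closedBall 0 r ⊆ r • (K ∩ closedBall 0 1 : Set E) := by
  rintro θ ⟨hθK, hθr⟩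
  rw [mem_closedBall_zero_iff] at hθr
  rcases hr.eq_or_lt with rfl | hr
  · exact ⟨0, ⟨K.zero_mem, by simp⟩, by simpa using (norm_le_zero_iff.1 hθr).symm⟩
  · refine ⟨r⁻¹ • θ, ⟨K.smul_mem (inv_nonneg.2 hr.le) hθK, ?_⟩, smul_inv_smul₀ hr.ne' θ⟩
    rwa [mem_closedBall_zero_iff, norm_smul, norm_inv, Real.norm_of_nonneg hr.le,
      inv_mul_le_one₀ hr]

lemma neg_vadd_inter_closedBall_subset (K : PointedCone ℝ E) {c : E} (hc : -c ∈ K) (θ₀ : E)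
    (t : ℝ) : -c +ᵥ (K ∩ closedBall θ₀ t : Set E) ⊆ K ∩ closedBall 0 (t + ‖θ₀ - c‖) := by
  rintro _ ⟨θ, ⟨hθK, hθt⟩, rfl⟩
  refine ⟨K.add_mem hc hθK, mem_closedBall_zero_iff.2 ?_⟩
  calc ‖-c + θ‖ = ‖(θ - θ₀) + (θ₀ - c)‖ := by congr 1; abel
    _ ≤ t + ‖θ₀ - c‖ := (norm_add_le _ _).trans <| by gcongr; exact mem_closedBall_iff_norm.1 hθt

variable [CompleteSpace E]

lemma meanWidth_singleton (hX : Integrable X μ) (hX₀ : ∫ ω, X ω ∂μ = 0) (v : E) :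
    meanWidth μ X {v} = 0 := by
  simp only [meanWidth, supportFun_singleton, real_inner_comm v]
  rw [integral_inner hX, hX₀, inner_zero_right]

lemma meanWidth_vadd (hX : Integrable X μ) (hX₀ : ∫ ω, X ω ∂μ = 0) (hS : S.Nonempty)
    (hS' : IsBounded S) (v : E) : meanWidth μ X (v +ᵥ S) = meanWidth μ X S := by
  rw [← singleton_vadd, vadd_eq_add, meanWidth_add hX (singleton_nonempty v) isBounded_singleton
    hS hS', meanWidth_singleton hX hX₀, zero_add]

theorem localized_gaussian_width_bound_general (hX : Integrable X μ) (hX₀ : ∫ ω, X ω ∂μ = 0)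
    (K : PointedCone ℝ E) {c : E} (hc : -c ∈ K) {θ₀ : E} {t : ℝ}
    (hne : (K ∩ closedBall θ₀ t : Set E).Nonempty) :
    meanWidth μ X (-θ₀ +ᵥ (K ∩ closedBall θ₀ t : Set E)) ≤
      (t + ‖θ₀ - c‖) * meanWidth μ X (K ∩ closedBall 0 1) := by
  have ht : 0 ≤ t := nonempty_closedBall.1 hne.right
  have hr : 0 ≤ t + ‖θ₀ - c‖ := by positivity
  have hbdd : IsBounded (K ∩ closedBall θ₀ t : Set E) :=
    isBounded_closedBall.subset inter_subset_right
  have hbdd₁ : IsBounded (K ∩ closedBall 0 1 : Set E) :=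
    isBounded_closedBall.subset inter_subset_right
  have hsub := (neg_vadd_inter_closedBall_subset K hc θ₀ t).trans
    (inter_closedBall_zero_subset_smul K hr)
  calc meanWidth μ X (-θ₀ +ᵥ (K ∩ closedBall θ₀ t : Set E))
      = meanWidth μ X (-c +ᵥ (K ∩ closedBall θ₀ t : Set E)) := by
        rw [meanWidth_vadd hX hX₀ hne hbdd, meanWidth_vadd hX hX₀ hne hbdd]
    _ ≤ meanWidth μ X ((t + ‖θ₀ - c‖) • (K ∩ closedBall 0 1 : Set E)) :=
        meanWidth_mono hX hsub hne.vadd_set (hbdd₁.smul₀ _)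
    _ = (t + ‖θ₀ - c‖) * meanWidth μ X (K ∩ closedBall 0 1) := meanWidth_smul hr _

end MeanWidth

section IsotonicMatrix

open Metric Set
open scoped Pointwise RealInnerProductSpace

/-- The cone of monotone real functions on a preorder. -/
def monotoneCone (ι : Type*) [Preorder ι] : PointedCone ℝ (EuclideanSpace ℝ ι) where
  carrier := {x | Monotone x}
  add_mem' hx hy := hx.add hy
  zero_mem' := monotone_const
  smul_mem' r _ hx := hx.const_smul r.2

variable {n1 n2 : ℕ}

/-- A matrix as a vector of the Euclidean space indexed by its positions. Unlike the function type
`Fin n1 → Fin n2 → ℝ`, that space carries the Frobenius norm and the trace inner product. -/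
def vectorize : (Fin n1 → Fin n2 → ℝ) ≃ₗ[ℝ] EuclideanSpace ℝ (Fin n1 × Fin n2) :=
  (LinearEquiv.curry ℝ ℝ (Fin n1) (Fin n2)).symm ≪≫ₗ (WithLp.linearEquiv 2 ℝ _).symm

lemma vectorize_apply (θ : Fin n1 → Fin n2 → ℝ) (p : Fin n1 × Fin n2) :
    vectorize θ p = θ p.1 p.2 := rfl

lemma norm_vectorize_sq (θ : Fin n1 → Fin n2 → ℝ) : ‖vectorize θ‖ ^ 2 = frobSq θ := by
  simp only [EuclideanSpace.real_norm_sq_eq, vectorize_apply, frobSq, Fintype.sum_prod_type]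

lemma inner_vectorize (a b : Fin n1 → Fin n2 → ℝ) : ⟪vectorize a, vectorize b⟫ = ip a b := by
  simp only [PiLp.inner_apply, vectorize_apply, ip, Fintype.sum_prod_type, Real.inner_apply]

lemma vectorize_mem_monotoneCone {θ : Fin n1 → Fin n2 → ℝ} :
    vectorize θ ∈ monotoneCone (Fin n1 × Fin n2) ↔ Isotonic θ :=
  ⟨fun h _ _ _ _ hik hjl ↦ h (Prod.mk_le_mk.2 ⟨hik, hjl⟩), fun h _ _ hpq ↦ h hpq.1 hpq.2⟩

lemma neg_vectorize_const_mem_monotoneCone (m : ℝ) :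
    -vectorize (fun _ _ ↦ m) ∈ monotoneCone (Fin n1 × Fin n2) := by
  rw [← map_neg, vectorize_mem_monotoneCone]
  exact fun _ _ _ _ _ _ ↦ le_rfl

lemma vectorize_mem_closedBall {θ a : Fin n1 → Fin n2 → ℝ} {t : ℝ} (ht : 0 ≤ t) :
    vectorize θ ∈ closedBall (vectorize a) t ↔ frobSq (θ - a) ≤ t ^ 2 := by
  rw [mem_closedBall_iff_norm, ← map_sub, ← norm_vectorize_sq, sq_le_sq₀ (norm_nonneg _) ht]

lemma image_vectorize_isotonic_ball (a : Fin n1 → Fin n2 → ℝ) {t : ℝ} (ht : 0 ≤ t) :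
    vectorize '' {θ | Isotonic θ ∧ frobSq (θ - a) ≤ t ^ 2} =
      (monotoneCone (Fin n1 × Fin n2) : Set _) ∩ closedBall (vectorize a) t := by
  rw [← image_preimage_eq (_ ∩ closedBall _ _) vectorize.surjective]
  congr! 1
  ext θ
  exact and_congr vectorize_mem_monotoneCone.symm (vectorize_mem_closedBall ht).symm

lemma image_vectorize_isotonic_unitBall :
    vectorize '' {θ : Fin n1 → Fin n2 → ℝ | Isotonic θ ∧ frobSq θ ≤ 1} =
      (monotoneCone (Fin n1 × Fin n2) : Set _) ∩ closedBall 0 1 := by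
  simpa only [sub_zero, one_pow, map_zero] using
    image_vectorize_isotonic_ball (0 : Fin n1 → Fin n2 → ℝ) zero_le_one

lemma supportFun_neg_vadd_image_vectorize (p : (Fin n1 → Fin n2 → ℝ) → Prop)
    (a ε : Fin n1 → Fin n2 → ℝ) :
    supportFun (-vectorize a +ᵥ vectorize '' {θ | p θ}) (vectorize ε) =
      ⨆ θ : {θ // p θ}, ip ε (θ.1 - a) := by
  rw [supportFun, ← image_vadd, image_image, image_image, sSup_image']
  refine iSup_congr fun θ ↦ ?_
  rw [vadd_eq_add, neg_add_eq_sub, ← map_sub, inner_vectorize]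

lemma supportFun_image_vectorize (p : (Fin n1 → Fin n2 → ℝ) → Prop) (ε : Fin n1 → Fin n2 → ℝ) :
    supportFun (vectorize '' {θ | p θ}) (vectorize ε) = ⨆ θ : {θ // p θ}, ip ε θ.1 := by
  simpa only [map_zero, neg_zero, zero_vadd, sub_zero] using
    supportFun_neg_vadd_image_vectorize p 0 ε

lemma mul_matVar_eq_frobSq (θ : Fin n1 → Fin n2 → ℝ) :
    (n1 * n2 : ℝ) * matVar θ =
      frobSq (θ - fun _ _ ↦ (∑ i, ∑ j, θ i j) / (n1 * n2 : ℝ)) := by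
  refine mul_div_cancel_of_imp' fun h ↦ ?_
  rcases mul_eq_zero.1 h with h | h <;> obtain rfl := Nat.cast_eq_zero.1 h <;> simp

lemma norm_vectorize_sub_mean (θ : Fin n1 → Fin n2 → ℝ) :
    ‖vectorize θ - vectorize fun _ _ ↦ (∑ i, ∑ j, θ i j) / (n1 * n2 : ℝ)‖ =
      √((n1 * n2 : ℝ) * matVar θ) := by
  rw [mul_matVar_eq_frobSq, ← norm_vectorize_sq, Real.sqrt_sq (norm_nonneg _), map_sub]

lemma noiseMeasure_eq_pi (σ : ℝ) : noiseMeasure n1 n2 σ =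
    Measure.pi fun _ ↦ Measure.pi fun _ ↦ gaussianReal 0 (σ ^ 2).toNNReal := by
  rw [Real.toNNReal_of_nonneg (sq_nonneg σ)]
  rfl

lemma hasLaw_entry_noiseMeasure (σ : ℝ) (i : Fin n1) (j : Fin n2) :
    HasLaw (fun ε ↦ ε i j) (gaussianReal 0 (σ ^ 2).toNNReal) (noiseMeasure n1 n2 σ) := by
  rw [noiseMeasure_eq_pi]
  have hrow := measurePreserving_eval
    (fun _ : Fin n1 ↦ Measure.pi fun _ : Fin n2 ↦ gaussianReal 0 (σ ^ 2).toNNReal) i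
  exact ((measurePreserving_eval _ j).comp hrow).hasLaw

lemma integrable_entry_noiseMeasure (σ : ℝ) (i : Fin n1) (j : Fin n2) :
    Integrable (fun ε ↦ ε i j) (noiseMeasure n1 n2 σ) :=
  (hasLaw_entry_noiseMeasure σ i j).hasGaussianLaw.integrable

lemma integral_entry_noiseMeasure (σ : ℝ) (i : Fin n1) (j : Fin n2) :
    ∫ ε, ε i j ∂noiseMeasure n1 n2 σ = 0 := by
  rw [(hasLaw_entry_noiseMeasure σ i j).integral_eq, integral_id_gaussianReal]

lemma integrable_vectorize (σ : ℝ) : Integrable vectorize (noiseMeasure n1 n2 σ) :=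
  .of_eval_piLp fun p ↦ integrable_entry_noiseMeasure σ p.1 p.2

lemma integral_vectorize (σ : ℝ) : ∫ ε, vectorize ε ∂noiseMeasure n1 n2 σ = 0 := by
  ext p
  rw [eval_integral_piLp fun p ↦ integrable_entry_noiseMeasure σ p.1 p.2]
  exact integral_entry_noiseMeasure σ p.1 p.2

end IsotonicMatrix

/-- **Inequality (fft) (reduction of the localized Gaussian width).** For every
isotonic `θ*` and `t ≥ 0`,
`E sup_{θ ∈ B(θ*,t)} ⟨ε, θ − θ*⟩ ≤ (t + sqrt(n V(θ*))) E sup_{θ ∈ B(0,1)} ⟨ε, θ⟩`,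
where `B(θ*,t) = {θ ∈ M : ‖θ − θ*‖ ≤ t}` and `ε` has i.i.d. `N(0,σ²)` entries. -/
theorem localized_gaussian_width_bound
    {n1 n2 : ℕ} (hn1 : 1 < n1) (hn2 : 1 < n2) (σ : ℝ) (hσ : 0 < σ)
    (θstar : Fin n1 → Fin n2 → ℝ) (hθstar : Isotonic θstar) (t : ℝ) (ht : 0 ≤ t) :
    (∫ ε, (⨆ θ : {θ : Fin n1 → Fin n2 → ℝ // Isotonic θ ∧ frobSq (θ - θstar) ≤ t ^ 2},
        ip ε (θ.1 - θstar)) ∂noiseMeasure n1 n2 σ) ≤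
      (t + Real.sqrt ((n1 * n2 : ℝ) * matVar θstar)) *
        ∫ ε, (⨆ θ : {θ : Fin n1 → Fin n2 → ℝ // Isotonic θ ∧ frobSq θ ≤ 1},
          ip ε θ.1) ∂noiseMeasure n1 n2 σ := by
  simpa only [meanWidth, ← image_vectorize_isotonic_ball _ ht, ← image_vectorize_isotonic_unitBall,
    supportFun_neg_vadd_image_vectorize, supportFun_image_vectorize, norm_vectorize_sub_mean] using
    localized_gaussian_width_bound_general (integrable_vectorize σ) (integral_vectorize σ) _
      (neg_vectorize_const_mem_monotoneCone ((∑ i, ∑ j, θstar i j) / (n1 * n2)))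
      ⟨_, vectorize_mem_monotoneCone.2 hθstar, Metric.mem_closedBall_self ht⟩
end
end
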